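/- arXiv:2503.24186 — 6 statements merged into one kernel-verified Lean document; each statement's English description precedes it below -/
import Mathlib

section
/- Let R be a commutative Noetherian ring and M a finitely generated R-module. Then ca_R(M) = R if and only if M has finite projective dimension over R. -/
open CategoryTheory

noncomputable section

universe u

variable (R : Type u) [CommRing R]

/-- The `n`-th Ext group of two `R`-modules, as an `R`-module. -/
abbrev ExtM (n : ℕ) (M N : ModuleCat.{u} R) : ModuleCat.{u} R :=
  ((Ext R (ModuleCat.{u} R) n).obj (Opposite.op M)).obj N

/-- The `n`-th cohomological annihilator of a module `M`:
elements `r` with `r • Ext^i(M, N) = 0` for all `i ≥ n` and all finitely generated `N`. -/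
def caN (n : ℕ) (M : ModuleCat.{u} R) : Ideal R where
  carrier := {r | ∀ i, n ≤ i → ∀ N : ModuleCat.{u} R, Module.Finite R N →
    ∀ x : ExtM R i M N, r • x = 0}
  zero_mem' := by intro i _ N _ x; simp
  add_mem' := by
    intro a b ha hb i hi N hN x
    rw [add_smul, ha i hi N hN x, hb i hi N hN x, add_zero]
  smul_mem' := by
    intro c r hr i hi N hN x
    simp only [smul_eq_mul, mul_smul, hr i hi N hN x, smul_zero]

/-- The cohomological annihilator `ca_R(M) = ⋃ₙ ca_R^n(M)`. -/
def ca (M : ModuleCat.{u} R) : Set R := ⋃ n : ℕ, (caN R n M : Set R)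

/-- The `n`-th co-cohomological annihilator of a module `M`. -/
def cocaN (n : ℕ) (M : ModuleCat.{u} R) : Ideal R where
  carrier := {r | ∀ i, n ≤ i → ∀ N : ModuleCat.{u} R, Module.Finite R N →
    ∀ x : ExtM R i N M, r • x = 0}
  zero_mem' := by intro i _ N _ x; simp
  add_mem' := by
    intro a b ha hb i hi N hN x
    rw [add_smul, ha i hi N hN x, hb i hi N hN x, add_zero]
  smul_mem' := by
    intro c r hr i hi N hN x
    simp only [smul_eq_mul, mul_smul, hr i hi N hN x, smul_zero]

/-- The co-cohomological annihilator `coca_R(M) = ⋃ₙ coca_R^n(M)`. -/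
def coca (M : ModuleCat.{u} R) : Set R := ⋃ n : ℕ, (cocaN R n M : Set R)

/-- `M` has projective dimension at most `n`: `Ext^i(M, -) = 0` for all `i > n`. -/
def projDimLE (n : ℕ) (M : ModuleCat.{u} R) : Prop :=
  ∀ i : ℕ, n < i → ∀ N : ModuleCat.{u} R, Subsingleton (ExtM R i M N)

/-- `M` has injective dimension at most `n`: `Ext^i(-, M) = 0` for all `i > n`. -/
def injDimLE (n : ℕ) (M : ModuleCat.{u} R) : Prop :=
  ∀ i : ℕ, n < i → ∀ N : ModuleCat.{u} R, Subsingleton (ExtM R i N M)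

/-- `K` is an `n`-th syzygy of `M` with respect to resolutions by
finitely generated projective modules. -/
def IsSyz : ℕ → ModuleCat.{u} R → ModuleCat.{u} R → Prop
  | 0, M, K => Nonempty (K ≃ₗ[R] M)
  | n + 1, M, K => ∃ (L P : ModuleCat.{u} R), IsSyz n M L ∧
      Module.Finite R P ∧ Module.Projective R P ∧
      ∃ f : P →ₗ[R] L, Function.Surjective f ∧ Nonempty (K ≃ₗ[R] LinearMap.ker f)

/-- `X` is a direct summand of `Y`. -/
def IsSummand (X Y : ModuleCat.{u} R) : Prop :=
  ∃ (i : X →ₗ[R] Y) (p : Y →ₗ[R] X), p.comp i = LinearMap.id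

/-- `X` is a direct summand of a finite direct sum of copies of `G`. -/
def IsSummandOfCopies (G X : ModuleCat.{u} R) : Prop :=
  ∃ k : ℕ, IsSummand R X (ModuleCat.of R (Fin k → G))

/-- The subcategories `thickⁿ(G)` of `mod R`. -/
def thickN (G : ModuleCat.{u} R) : ℕ → Set (ModuleCat.{u} R)
  | 0 => {X | Subsingleton X}
  | n + 1 => {X | ∃ (Y Y₁ Y₂ : ModuleCat.{u} R) (f : Y₁ →ₗ[R] Y) (g : Y →ₗ[R] Y₂),
      Function.Injective f ∧ Function.Surjective g ∧ LinearMap.ker g = LinearMap.range f ∧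
      ((Y₁ ∈ thickN G n ∧ IsSummandOfCopies R G Y₂) ∨
        (IsSummandOfCopies R G Y₁ ∧ Y₂ ∈ thickN G n)) ∧
      IsSummand R X Y}

/-- The balls `|G|ₙ` of Dao–Takahashi. -/
def ballN (G : ModuleCat.{u} R) : ℕ → Set (ModuleCat.{u} R)
  | 0 => {X | Subsingleton X}
  | n + 1 => {Y | ∃ (Y' Y₁ Y₂ : ModuleCat.{u} R)
      (f : Y₁ →ₗ[R] (ModuleCat.of R (Y × Y'))) (g : (ModuleCat.of R (Y × Y')) →ₗ[R] Y₂),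
      Function.Injective f ∧ Function.Surjective g ∧ LinearMap.ker g = LinearMap.range f ∧
      Y₁ ∈ ballN G n ∧ IsSummandOfCopies R G Y₂}

/-- A regular local ring: a Noetherian local ring whose maximal ideal can be
generated by `dim R` elements. -/
def IsRegularLocal (A : Type u) [CommRing A] [IsLocalRing A] : Prop :=
  IsNoetherianRing A ∧ ∃ s : Finset A, Ideal.span (↑s : Set A) = IsLocalRing.maximalIdeal A ∧
    (s.card : WithBot ℕ∞) = ringKrullDim A

/-- The localization of a module at a prime, as a module category object over the local ring. -/
abbrev locMod (p : PrimeSpectrum R) (M : ModuleCat.{u} R) :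
    ModuleCat.{u} (Localization.AtPrime p.asIdeal) :=
  ModuleCat.of (Localization.AtPrime p.asIdeal) (LocalizedModule p.asIdeal.primeCompl M)

/-- Depth of a module over a local ring, via vanishing of `Ext` from the residue field. -/
def depthE (A : Type u) [CommRing A] [IsLocalRing A] (N : ModuleCat.{u} A) : ℕ∞ :=
  sInf ((fun n : ℕ => (n : ℕ∞)) ''
    {n : ℕ | ¬ Subsingleton (ExtM A n (ModuleCat.of A (IsLocalRing.ResidueField A)) N)})

/-- The large restricted flat dimension of `M`. -/
def rfdE (M : ModuleCat.{u} R) : ℕ∞ :=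
  ⨆ p : PrimeSpectrum R,
    (depthE (Localization.AtPrime p.asIdeal)
        (ModuleCat.of (Localization.AtPrime p.asIdeal) (Localization.AtPrime p.asIdeal)) -
      depthE (Localization.AtPrime p.asIdeal) (locMod R p M))

/-- `r • f` factors through a finitely generated projective module. -/
def FactorsThroughProj (M : ModuleCat.{u} R) (f : M →ₗ[R] M) : Prop :=
  ∃ P : ModuleCat.{u} R, Module.Projective R P ∧ Module.Finite R P ∧
    ∃ (g : M →ₗ[R] P) (h : P →ₗ[R] M), h.comp g = f

/-- The annihilator of the stable endomorphism ring of `M`. -/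
def annStableEnd (M : ModuleCat.{u} R) : Set R :=
  {r | ∀ f : M →ₗ[R] M, FactorsThroughProj R M (r • f)}

/-- A resolving subcategory of `mod R`. -/
def IsResolving (C : Set (ModuleCat.{u} R)) : Prop :=
  (∀ P : ModuleCat.{u} R, Module.Finite R P → Module.Projective R P → P ∈ C) ∧
  (∀ X Y : ModuleCat.{u} R, Y ∈ C → IsSummand R X Y → X ∈ C) ∧
  (∀ (Y Y₁ Y₂ : ModuleCat.{u} R) (f : Y₁ →ₗ[R] Y) (g : Y →ₗ[R] Y₂),
    Function.Injective f → Function.Surjective g → LinearMap.ker g = LinearMap.range f →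
    Y₁ ∈ C → Y₂ ∈ C → Y ∈ C) ∧
  (∀ X ∈ C, ∀ K : ModuleCat.{u} R, IsSyz R 1 X K → K ∈ C)

/-- The smallest resolving subcategory containing `G`. -/
def resCl (G : ModuleCat.{u} R) : Set (ModuleCat.{u} R) :=
  ⋂₀ {C | IsResolving R C ∧ G ∈ C}

end

open CategoryTheory Limits

/-- The inclusion of finitely generated modules into all modules. -/
noncomputable abbrev fgIncl (R : Type u) [CommRing R] : FGModuleCat.{u} R ⥤ ModuleCat.{u} R :=
  forget₂ (FGModuleCat.{u} R) (ModuleCat.{u} R)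

theorem fg_exists_cover (R : Type u) [CommRing R] [IsNoetherianRing R] (X : FGModuleCat.{u} R) :
    ∃ (P : FGModuleCat.{u} R) (f : P ⟶ X), Epi f ∧ Projective ((fgIncl R).obj P) := by
  obtain ⟨n, f, hf⟩ := Module.Finite.exists_fin' R X
  refine ⟨FGModuleCat.of R (Fin n → R), ⟨ModuleCat.ofHom f⟩, ?_, ?_⟩
  · apply (fgIncl R).epi_of_epi_map
    rw [ModuleCat.epi_iff_surjective]
    exact hf
  · exact ModuleCat.projective_of_categoryTheory_projective
      (ModuleCat.of R (Fin n → R))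

theorem fg_projective (R : Type u) [CommRing R] [IsNoetherianRing R] (P : FGModuleCat.{u} R)
    (h : Projective ((fgIncl R).obj P)) : Projective P := by
  refine ⟨fun {E X} f e he => ?_⟩
  have : Epi ((fgIncl R).map e) := inferInstance
  obtain ⟨g, hg⟩ := Projective.factors ((fgIncl R).map f) ((fgIncl R).map e)
  refine ⟨(fgIncl R).preimage g, (fgIncl R).map_injective ?_⟩
  simpa using hg

theorem fg_enough (R : Type u) [CommRing R] [IsNoetherianRing R] :
    EnoughProjectives (FGModuleCat.{u} R) := by
  refine ⟨fun X => ?_⟩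
  obtain ⟨P, f, hf, hP⟩ := fg_exists_cover R X
  exact ⟨{ p := P, projective := fg_projective R P hP, f := f, epi := hf }⟩

theorem fg_projective_map (R : Type u) [CommRing R] [IsNoetherianRing R] (P : FGModuleCat.{u} R)
    (h : Projective P) : Projective ((fgIncl R).obj P) := by
  obtain ⟨Q, f, hf, hQ⟩ := fg_exists_cover R P
  exact Retract.projective (Y := (fgIncl R).obj Q)
    (Retract.map ⟨Projective.factorThru (𝟙 P) f, f, by simp⟩ (fgIncl R))

theorem exists_fg_resolution (R : Type u) [CommRing R] [IsNoetherianRing R]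
    (M : ModuleCat.{u} R) [Module.Finite R M] :
    ∃ P : ProjectiveResolution M, ∀ n, Module.Finite R (P.complex.X n) := by
  have := fg_enough R
  let Q := ProjectiveResolution.of (FGModuleCat.of R M)
  let F := fgIncl R
  have : ((HomologicalComplex.single (FGModuleCat.{u} R) (ComplexShape.down ℕ) 0).obj
      (FGModuleCat.of R M)).HasHomology 0 := inferInstance
  refine ⟨{
    complex := (F.mapHomologicalComplex _).obj Q.complex
    projective := fun n => fg_projective_map R _ (Q.projective n)
    π := (F.mapHomologicalComplex _).map Q.π ≫
      (HomologicalComplex.singleMapHomologicalComplex F (ComplexShape.down ℕ) 0).hom.app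
        (FGModuleCat.of R M)
    quasiIso := ?_ }, fun n => ?_⟩
  · have : QuasiIso ((F.mapHomologicalComplex (ComplexShape.down ℕ)).map Q.π) := inferInstance
    infer_instance
  · exact inferInstanceAs (Module.Finite R (Q.complex.X n))

theorem ext_subsingleton_iff (R : Type u) [CommRing R] (M N : ModuleCat.{u} R)
    (P : ProjectiveResolution M) (n : ℕ) :
    Subsingleton (ExtM R (n + 1) M N) ↔
      ∀ f : P.complex.X (n + 1) ⟶ N, P.complex.d (n + 2) (n + 1) ≫ f = 0 →
        ∃ g : P.complex.X n ⟶ N, P.complex.d (n + 1) n ≫ g = f := by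
  rw [← ModuleCat.isZero_iff_subsingleton, (P.isoExt (R := R) (n + 1) N).isZero_iff,
    ← HomologicalComplex.exactAt_iff_isZero_homology,
    HomologicalComplex.exactAt_iff' _ n (n + 1) (n + 2) (by simp) (by simp),
    ShortComplex.moduleCat_exact_iff]
  rfl

theorem ext_subsingleton_of_fg (R : Type u) [CommRing R] [IsNoetherianRing R]
    (M : ModuleCat.{u} R) [Module.Finite R M] (n : ℕ)
    (h : ∀ N : ModuleCat.{u} R, Module.Finite R N → Subsingleton (ExtM R (n + 1) M N))
    (N : ModuleCat.{u} R) : Subsingleton (ExtM R (n + 1) M N) := by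
  obtain ⟨P, hP⟩ := exists_fg_resolution R M
  rw [ext_subsingleton_iff R M N P n]
  intro f hf
  let d := P.complex.d (n + 1) n
  have hfin : Module.Finite R (image d : ModuleCat.{u} R) :=
    Module.Finite.of_surjective (factorThruImage d).hom
      ((ModuleCat.epi_iff_surjective _).1 inferInstance)
  obtain ⟨s, hs⟩ := (ext_subsingleton_iff R M (image d) P n).1 (h _ hfin) (factorThruImage d) (by
    rw [← cancel_mono (image.ι d)]
    simp [d])
  have hex := P.exact_succ n
  have : Epi (ShortComplex.mk _ _ (show P.complex.d (n + 2) (n + 1) ≫ factorThruImage d = 0 by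
    rw [← cancel_mono (image.ι d)]
    simp [d])).g := by dsimp; infer_instance
  have hex' : (ShortComplex.mk _ _ (show P.complex.d (n + 2) (n + 1) ≫ factorThruImage d = 0 by
    rw [← cancel_mono (image.ι d)]
    simp [d])).Exact := by
    rw [ShortComplex.moduleCat_exact_iff] at hex ⊢
    intro x hx
    refine hex x ?_
    have : d.hom x = (image.ι d).hom ((factorThruImage d).hom x) := by
      rw [← LinearMap.comp_apply, ← ModuleCat.hom_comp, image.fac]
    refine this.trans ?_
    erw [hx]
    simp
  refine ⟨s ≫ hex'.desc f hf, ?_⟩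
  rw [← Category.assoc, hs]
  exact hex'.g_desc f hf

/-- `ca_R(M) = R` iff `M` has finite projective dimension. -/
theorem stmt0 (R : Type u) [CommRing R] [IsNoetherianRing R]
    (M : ModuleCat.{u} R) [Module.Finite R M] :
    ca R M = Set.univ ↔ ∃ n : ℕ, projDimLE R n M := by
  constructor
  · intro h
    have h1 : (1 : R) ∈ ca R M := h ▸ Set.mem_univ _
    obtain ⟨n, hn⟩ := Set.mem_iUnion.1 h1
    refine ⟨n, fun i hi N => ?_⟩
    obtain ⟨i, rfl⟩ : ∃ j, i = j + 1 := ⟨i - 1, by omega⟩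
    refine ext_subsingleton_of_fg R M i (fun N hN => ⟨fun x y => ?_⟩) N
    have key : ∀ z : ExtM R (i + 1) M N, z = 0 := fun z => by
      have := hn (i + 1) (by omega) N hN z
      rwa [one_smul] at this
    rw [key x, key y]
  · rintro ⟨n, hn⟩
    refine Set.eq_univ_of_forall fun r => Set.mem_iUnion.2 ⟨n + 1, ?_⟩
    intro i hi N _ x
    have := hn i (by omega) N
    exact Subsingleton.elim _ _
end

section
/- Let R be a commutative Noetherian ring, M a finitely generated R-module, and n ≥ 1. Then ca_R^n(M) = ann_R Ext_R^n(M, Ω^n_R(M)), where Ω^n_R(M) denotes an n-th syzygy of M. -/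
open CategoryTheory

open CategoryTheory Limits

/-- Elementwise description of the annihilator of the homology of a complex of modules. -/
theorem homology_ann_iff (R : Type u) [CommRing R] (S : ShortComplex (ModuleCat.{u} R)) (r : R) :
    (∀ x : S.homology, r • x = 0) ↔
      ∀ f : S.X₂, S.g.hom f = 0 → ∃ g : S.X₁, S.f.hom g = r • f := by
  let e : S.homology ≃ₗ[R] (LinearMap.ker S.g.hom ⧸ LinearMap.range S.moduleCatToCycles) :=
    S.moduleCatHomologyIso.toLinearEquiv
  constructor
  · intro h f hf
    have h1 := h (e.symm (Submodule.Quotient.mk ⟨f, hf⟩))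
    rw [← map_smul, LinearEquiv.map_eq_zero_iff, ← Submodule.Quotient.mk_smul,
      Submodule.Quotient.mk_eq_zero] at h1
    obtain ⟨g, hg⟩ := h1
    exact ⟨g, congrArg Subtype.val hg⟩
  · intro h x
    obtain ⟨y, rfl⟩ := e.symm.surjective x
    obtain ⟨⟨f, hf⟩, rfl⟩ := Submodule.Quotient.mk_surjective _ y
    obtain ⟨g, hg⟩ := h f hf
    rw [← map_smul, LinearEquiv.map_eq_zero_iff, ← Submodule.Quotient.mk_smul]
    apply (Submodule.Quotient.mk_eq_zero _).2
    exact ⟨g, Subtype.ext hg⟩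

theorem extM_ann_iff_res (R : Type u) [CommRing R] {M : ModuleCat.{u} R}
    (P : ProjectiveResolution M) (N : ModuleCat.{u} R) (p : ℕ) (r : R) :
    (∀ x : ExtM R (p + 1) M N, r • x = 0) ↔
      ∀ f : P.complex.X (p + 1) ⟶ N, P.complex.d (p + 2) (p + 1) ≫ f = 0 →
        ∃ g : P.complex.X p ⟶ N, P.complex.d (p + 1) p ≫ g = r • f := by
  let K := P.complex.linearYonedaObj R N
  let e := (P.isoExt (R := R) (p + 1) N ≪≫
    ShortComplex.homologyMapIso (K.isoSc' p (p + 1) (p + 2) (by simp) (by simp))).toLinearEquiv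
  have h1 : (∀ x : ExtM R (p + 1) M N, r • x = 0) ↔
      ∀ x : (K.sc' p (p + 1) (p + 2)).homology, r • x = 0 := by
    constructor
    · intro h x
      obtain ⟨y, rfl⟩ := e.surjective x
      rw [← map_smul, h, map_zero]
    · intro h x
      apply e.injective
      rw [map_smul, map_zero]
      exact h _
  rw [h1]
  exact homology_ann_iff R _ r

theorem extM_ann_iff (R : Type u) [CommRing R] (M N : ModuleCat.{u} R) (i : ℕ) (hi : 1 ≤ i)
    (r : R) :
    (∀ x : ExtM R i M N, r • x = 0) ↔ ∀ x : Abelian.Ext M N i, r • x = 0 := by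
  obtain ⟨p, rfl⟩ : ∃ p, i = p + 1 := ⟨i - 1, by omega⟩
  let P := projectiveResolution M
  rw [extM_ann_iff_res R P]
  have hs : ∀ (f : P.complex.X (p + 1) ⟶ N) (hf : P.complex.d (p + 2) (p + 1) ≫ f = 0),
      r • P.extMk f (p + 2) rfl hf = 0 ↔
        ∃ g : P.complex.X p ⟶ N, P.complex.d (p + 1) p ≫ g = r • f := by
    intro f hf
    rw [Abelian.Ext.smul_eq_comp_mk₀, ProjectiveResolution.extMk_comp_mk₀,
      ProjectiveResolution.extMk_eq_zero_iff _ _ _ _ _ p rfl]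
    simp
  constructor
  · intro h x
    obtain ⟨f, hf, rfl⟩ := P.extMk_surjective x (p + 2) rfl
    exact (hs f hf).2 (h f hf)
  · intro h f hf
    exact (hs f hf).1 (h _)

/-- Every Ext class of degree at least `n` factors through the universal class of the
`n`-th syzygy. -/
theorem exists_universal (R : Type u) [CommRing R] (M : ModuleCat.{u} R) (n : ℕ) :
    ∀ K : ModuleCat.{u} R, IsSyz R n M K → ∃ e : Abelian.Ext M K n,
      ∀ (m i : ℕ) (h : n + m = i) (N : ModuleCat.{u} R) (x : Abelian.Ext M N i),
        ∃ y : Abelian.Ext K N m, e.comp y h = x := by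
  induction n with
  | zero =>
    rintro K ⟨φ⟩
    refine ⟨Abelian.Ext.mk₀ φ.toModuleIso.inv, ?_⟩
    intro m i h N x
    obtain rfl : m = i := by omega
    exact ⟨(Abelian.Ext.mk₀ φ.toModuleIso.hom).comp x (zero_add m), by
      rw [Abelian.Ext.mk₀_comp_mk₀_assoc, Iso.inv_hom_id, Abelian.Ext.mk₀_id_comp]⟩
  | succ n ih =>
    rintro K ⟨L, P, hL, hP, hPp, f, hf, ⟨φ⟩⟩
    obtain ⟨e, he⟩ := ih L hL
    have hS : f.shortComplexKer.ShortExact := LinearMap.shortExact_shortComplexKer hf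
    have : Projective f.shortComplexKer.X₂ := (IsProjective.iff_projective P).1 hPp
    refine ⟨(e.comp hS.extClass rfl).comp (Abelian.Ext.mk₀ φ.toModuleIso.inv) (add_zero _), ?_⟩
    intro m i h N x
    obtain ⟨y, rfl⟩ := he (m + 1) i (by omega) N x
    obtain ⟨z, rfl⟩ := Abelian.Ext.contravariant_sequence_exact₃ hS N y
      (Abelian.Ext.eq_zero_of_projective _) (add_comm 1 m)
    refine ⟨(Abelian.Ext.mk₀ φ.toModuleIso.hom).comp z (zero_add m), ?_⟩
    rw [Abelian.Ext.comp_assoc_of_second_deg_zero, Abelian.Ext.mk₀_comp_mk₀_assoc,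
      Iso.inv_hom_id, Abelian.Ext.mk₀_id_comp]
    exact Abelian.Ext.comp_assoc _ _ _ _ _ (by omega)

theorem isSyz_finite (R : Type u) [CommRing R] [IsNoetherianRing R]
    (M : ModuleCat.{u} R) [Module.Finite R M] (n : ℕ)
    (K : ModuleCat.{u} R) (hK : IsSyz R n M K) : Module.Finite R K := by
  cases n with
  | zero =>
    obtain ⟨φ⟩ := hK
    exact Module.Finite.equiv φ.symm
  | succ n =>
    obtain ⟨L, P, hL, hP, hPp, f, hf, ⟨φ⟩⟩ := hK
    exact Module.Finite.equiv φ.symm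

/-- `ca_R^n(M) = ann_R Ext^n(M, Ωⁿ M)` for `n ≥ 1`. -/
theorem stmt1 (R : Type u) [CommRing R] [IsNoetherianRing R]
    (M : ModuleCat.{u} R) [Module.Finite R M] (n : ℕ) (hn : 1 ≤ n)
    (K : ModuleCat.{u} R) (hK : IsSyz R n M K) :
    (caN R n M : Set R) = {r : R | ∀ x : ExtM R n M K, r • x = 0} := by
  ext r
  constructor
  · intro h x
    exact h n le_rfl K (isSyz_finite R M n K hK) x
  · intro h i hi N _
    rw [extM_ann_iff R M N i (hn.trans hi) r]
    intro x
    obtain ⟨e, he⟩ := exists_universal R M n K hK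
    obtain ⟨y, rfl⟩ := he (i - n) i (by omega) N x
    rw [← Abelian.Ext.smul_comp, (extM_ann_iff R M K n hn r).1 h e, Abelian.Ext.zero_comp]
end

section
/- Let R be a commutative Noetherian ring, M a finitely generated R-module, and n ≥ 1. Then a prime ideal p of R contains ca_R^n(M) if and only if the projective dimension of M_p over R_p is at least n. Equivalently, {p ∈ Spec(R) : pd_{R_p}(M_p) ≥ n} = V(ca_R^n(M)). -/
open CategoryTheory

section resol
open CategoryTheory Limits

variable {R : Type u} [CommRing R]

theorem exists_fover (Z : ModuleCat.{u} R) : ∃ (P : ModuleCat.{u} R) (f : P ⟶ Z),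
    Projective P ∧ Epi f ∧ (Module.Finite R Z → Module.Finite R P) := by
  by_cases h : Module.Finite R Z
  · obtain ⟨P, _, _, _, _, f, hf⟩ := Module.exists_finite_presentation R Z
    refine ⟨ModuleCat.of R P, ModuleCat.ofHom f, ?_, ?_, fun _ => ‹_›⟩
    · rw [← IsProjective.iff_projective]; infer_instance
    · rw [ModuleCat.epi_iff_surjective]; exact hf
  · exact ⟨Projective.over Z, Projective.π Z, inferInstance, inferInstance, fun h' => absurd h' h⟩

noncomputable def fover (Z : ModuleCat.{u} R) : ModuleCat.{u} R := (exists_fover Z).choose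
noncomputable def fπ (Z : ModuleCat.{u} R) : fover Z ⟶ Z := (exists_fover Z).choose_spec.choose
instance fover_proj (Z : ModuleCat.{u} R) : Projective (fover Z) :=
  (exists_fover Z).choose_spec.choose_spec.1
instance fπ_epi (Z : ModuleCat.{u} R) : Epi (fπ Z) :=
  (exists_fover Z).choose_spec.choose_spec.2.1
theorem fover_fin (Z : ModuleCat.{u} R) (h : Module.Finite R Z) : Module.Finite R (fover Z) :=
  (exists_fover Z).choose_spec.choose_spec.2.2 h

noncomputable def fsyz (M : ModuleCat.{u} R) : ℕ → ModuleCat.{u} R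
  | 0 => M
  | n + 1 => kernel (fπ (fsyz M n))

theorem fsyz_fin [IsNoetherianRing R] (M : ModuleCat.{u} R) (h : Module.Finite R M) :
    ∀ n, Module.Finite R (fsyz M n)
  | 0 => h
  | n + 1 => by
    have := fover_fin _ (fsyz_fin M h n)
    exact Module.Finite.of_injective (kernel.ι (fπ (fsyz M n))).hom
      ((ModuleCat.mono_iff_injective _).1 inferInstance)

noncomputable def fι (M : ModuleCat.{u} R) (n : ℕ) : fsyz M (n+1) ⟶ fover (fsyz M n) :=
  kernel.ι (fπ (fsyz M n))
instance fι_mono (M : ModuleCat.{u} R) (n : ℕ) : Mono (fι M n) :=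
  inferInstanceAs (Mono (kernel.ι _))
theorem fι_π (M : ModuleCat.{u} R) (n : ℕ) : fι M n ≫ fπ (fsyz M n) = 0 := kernel.condition _
theorem fι_exact (M : ModuleCat.{u} R) (n : ℕ) :
    (ShortComplex.mk (fι M n) (fπ (fsyz M n)) (fι_π M n)).Exact := by
  apply ShortComplex.exact_of_f_is_kernel
  apply kernelIsKernel

noncomputable def fd (M : ModuleCat.{u} R) (n : ℕ) : fover (fsyz M (n+1)) ⟶ fover (fsyz M n) :=
  fπ (fsyz M (n+1)) ≫ fι M n

theorem fd_π (M : ModuleCat.{u} R) (n : ℕ) : fd M n ≫ fπ (fsyz M n) = 0 := by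
  rw [fd, Category.assoc, fι_π, comp_zero]

theorem fd_fd (M : ModuleCat.{u} R) (n : ℕ) : fd M (n+1) ≫ fd M n = 0 := by
  conv_lhs => arg 2; unfold fd
  rw [← Category.assoc, fd_π, zero_comp]

theorem fexact0 (M : ModuleCat.{u} R) (n : ℕ) :
    (ShortComplex.mk (fd M n) (fπ (fsyz M n)) (fd_π M n)).Exact := by
  let α : ShortComplex.mk (fd M n) _ (fd_π M n) ⟶
      ShortComplex.mk (fι M n) (fπ (fsyz M n)) (fι_π M n) :=
    { τ₁ := fπ _
      τ₂ := 𝟙 _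
      τ₃ := 𝟙 _
      comm₁₂ := by simp [fd]
      comm₂₃ := by simp }
  have : Epi α.τ₁ := fπ_epi _
  have : IsIso α.τ₂ := by dsimp [α]; infer_instance
  have : Mono α.τ₃ := by dsimp [α]; infer_instance
  rw [ShortComplex.exact_iff_of_epi_of_isIso_of_mono α]
  exact fι_exact M n

theorem fexact1 (M : ModuleCat.{u} R) (n : ℕ) :
    (ShortComplex.mk (fd M (n+1)) (fd M n) (fd_fd M n)).Exact := by
  let α : ShortComplex.mk (fd M (n+1)) _ (fd_π M (n+1)) ⟶
      ShortComplex.mk (fd M (n+1)) (fd M n) (fd_fd M n) :=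
    { τ₁ := 𝟙 _
      τ₂ := 𝟙 _
      τ₃ := fι M n
      comm₁₂ := by simp
      comm₂₃ := by simp [fd] }
  have : Epi α.τ₁ := by dsimp [α]; infer_instance
  have : IsIso α.τ₂ := by dsimp [α]; infer_instance
  have : Mono α.τ₃ := by dsimp [α]; infer_instance
  rw [← ShortComplex.exact_iff_of_epi_of_isIso_of_mono α]
  exact fexact0 M (n+1)

noncomputable def fcomplex (M : ModuleCat.{u} R) : ChainComplex (ModuleCat.{u} R) ℕ :=
  ChainComplex.of (fun n => fover (fsyz M n)) (fd M) (fd_fd M)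

theorem fcomplex_d (M : ModuleCat.{u} R) (n : ℕ) : (fcomplex M).d (n+1) n = fd M n := by
  simp [fcomplex]

theorem fcomplex_exact (M : ModuleCat.{u} R) (n : ℕ) : (fcomplex M).ExactAt (n + 1) := by
  rw [HomologicalComplex.exactAt_iff' _ (n + 1 + 1) (n + 1) n (by simp) (by simp)]
  have := fexact1 M n
  rw [← ShortComplex.exact_iff_of_iso (S₁ := ShortComplex.mk (fd M (n+1)) (fd M n) (fd_fd M n)) ?_]
  · exact this
  · exact ShortComplex.isoMk (Iso.refl _) (Iso.refl _) (Iso.refl _)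
      (by dsimp; erw [Category.id_comp, Category.comp_id]; exact fcomplex_d M (n+1))
      (by dsimp; erw [Category.id_comp, Category.comp_id]; exact fcomplex_d M n)

noncomputable def fres (M : ModuleCat.{u} R) : ProjectiveResolution M where
  complex := fcomplex M
  projective n := fover_proj _
  π := (ChainComplex.toSingle₀Equiv _ _).symm ⟨fπ M, by rw [fcomplex_d]; exact fd_π M 0⟩
  quasiIso := ⟨fun n => by
    cases n
    · rw [ChainComplex.quasiIsoAt₀_iff, ShortComplex.quasiIso_iff_of_zeros']
      · refine (ShortComplex.exact_and_epi_g_iff_of_iso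
          (S₂ := ShortComplex.mk (fd M 0) (fπ (fsyz M 0)) (fd_π M 0)) ?_).2
          ⟨fexact0 M 0, fπ_epi _⟩
        exact ShortComplex.isoMk (Iso.refl _) (Iso.refl _) (Iso.refl _)
          ((Category.id_comp _).trans ((fcomplex_d M 0).symm.trans (Category.comp_id _).symm))
          ((Category.id_comp _).trans
            ((ChainComplex.toSingle₀Equiv_symm_apply_f_zero (C := fcomplex M) (X := M) (fπ M)
                (by rw [fcomplex_d]; exact fd_π M 0)).symm.trans
              (Category.comp_id (X := (fcomplex M).X 0) (Y := M) _).symm))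
      all_goals rfl
    · rw [quasiIsoAt_iff_exactAt']
      · apply fcomplex_exact
      · apply ChainComplex.exactAt_succ_single_obj⟩

theorem fres_fin [IsNoetherianRing R] (M : ModuleCat.{u} R) (h : Module.Finite R M) (n : ℕ) :
    Module.Finite R ((fres M).complex.X n) := fover_fin _ (fsyz_fin M h n)
end resol

section cocyc
open CategoryTheory Limits
variable {R : Type u} [CommRing R]

theorem smul_ext_iff {M : ModuleCat.{u} R} (P : ProjectiveResolution M) (i : ℕ)
    (N : ModuleCat.{u} R) (r : R) :
    (∀ x : ExtM R (i+1) M N, r • x = 0) ↔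
    ∀ f : P.complex.X (i+1) ⟶ N, P.complex.d (i+2) (i+1) ≫ f = 0 →
      ∃ g : P.complex.X i ⟶ N, r • f = P.complex.d (i+1) i ≫ g := by
  let e := (P.isoExt (R := R) (i+1) N).toLinearEquiv
  let C := P.complex.linearYonedaObj R N
  let S := C.sc' i (i+1) (i+2)
  let e2 : C.homology (i+1) ≅ S.homology :=
    ShortComplex.homologyMapIso (C.isoSc' i (i+1) (i+2) (by simp) (by simp))
  let e3 : ExtM R (i+1) M N ≃ₗ[R]
      (LinearMap.ker S.g.hom ⧸ LinearMap.range S.moduleCatToCycles) := (e.trans e2.toLinearEquiv).trans S.moduleCatHomologyIso.toLinearEquiv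
  have h1 : (∀ x : ExtM R (i+1) M N, r • x = 0) ↔
      ∀ x : LinearMap.ker S.g.hom ⧸ LinearMap.range S.moduleCatToCycles, r • x = 0 := by
    constructor
    · intro h x
      have := congrArg e3 (h (e3.symm x))
      rwa [map_smul, map_zero, LinearEquiv.apply_symm_apply] at this
    · intro h x
      apply e3.injective
      rw [map_smul, h, map_zero]
  rw [h1]
  constructor
  · intro h f hf
    have := h (Submodule.Quotient.mk ⟨f, hf⟩)
    rw [← Submodule.Quotient.mk_smul, Submodule.Quotient.mk_eq_zero] at this
    obtain ⟨g, hg⟩ := this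
    exact ⟨g, (congrArg Subtype.val hg).symm⟩
  · intro h x
    obtain ⟨⟨f, hf⟩, rfl⟩ := Submodule.Quotient.mk_surjective _ x
    obtain ⟨g, hg⟩ := h f hf
    rw [← Submodule.Quotient.mk_smul, Submodule.Quotient.mk_eq_zero]
    exact ⟨g, Subtype.ext hg.symm⟩

/-- The partial contracting homotopy of multiplication by `r` . -/
def SH {M : ModuleCat.{u} R} (P : ProjectiveResolution M) (i : ℕ) (r : R) : Prop :=
  ∃ h : P.complex.X i ⟶ P.complex.X (i+1),
    P.complex.d (i+1) i ≫ h ≫ P.complex.d (i+1) i = r • P.complex.d (i+1) i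

theorem exists_lift_d {M : ModuleCat.{u} R} (P : ProjectiveResolution M) (i : ℕ)
    (f : P.complex.X (i+1) ⟶ P.complex.X (i+1)) (hf : f ≫ P.complex.d (i+1) i = 0) :
    ∃ g : P.complex.X (i+1) ⟶ P.complex.X (i+2), g ≫ P.complex.d (i+2) (i+1) = f :=
  ⟨(P.exact_succ i).liftFromProjective f hf, (P.exact_succ i).liftFromProjective_comp f hf⟩

theorem SH_exists {M : ModuleCat.{u} R} (P : ProjectiveResolution M) (i : ℕ) (r : R)
    (h : SH P i r) : ∃ (h : P.complex.X i ⟶ P.complex.X (i+1))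
      (h' : P.complex.X (i+1) ⟶ P.complex.X (i+2)),
      h' ≫ P.complex.d (i+2) (i+1) = r • 𝟙 _ - P.complex.d (i+1) i ≫ h := by
  obtain ⟨h, hh⟩ := h
  obtain ⟨h', hh'⟩ := exists_lift_d P i (r • 𝟙 _ - P.complex.d (i+1) i ≫ h)
    (by simp [Preadditive.sub_comp, hh])
  exact ⟨h, h', hh'⟩

theorem SH_succ {M : ModuleCat.{u} R} (P : ProjectiveResolution M) (i : ℕ) (r : R)
    (h : SH P i r) : SH P (i+1) r := by
  obtain ⟨h, h', hh'⟩ := SH_exists P i r h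
  exact ⟨h', by simp [hh', Preadditive.comp_sub]⟩

theorem SH_cocyc {M : ModuleCat.{u} R} (P : ProjectiveResolution M) (i : ℕ) (r : R)
    (h : SH P i r) (N : ModuleCat.{u} R) (x : ExtM R (i+1) M N) : r • x = 0 := by
  revert x
  rw [smul_ext_iff P]
  intro f hf
  obtain ⟨h, h', hh'⟩ := SH_exists P i r h
  refine ⟨h ≫ f, ?_⟩
  have : (h' ≫ P.complex.d (i+2) (i+1)) ≫ f = 0 := by rw [Category.assoc, hf, comp_zero]
  rw [hh', Preadditive.sub_comp, sub_eq_zero] at this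
  simpa using this

theorem SH_of_cocyc {M : ModuleCat.{u} R} (P : ProjectiveResolution M) (i : ℕ) (r : R)
    (h : ∀ x : ExtM R (i+1) M (ModuleCat.of R (LinearMap.range (P.complex.d (i+1) i).hom)),
      r • x = 0) : SH P i r := by
  rw [smul_ext_iff P] at h
  let q := ModuleCat.ofHom (P.complex.d (i+1) i).hom.rangeRestrict
  let ι := ModuleCat.ofHom (LinearMap.range (P.complex.d (i+1) i).hom).subtype
  have hq : q ≫ ι = P.complex.d (i+1) i := rfl
  have : Mono ι := (ModuleCat.mono_iff_injective _).2 Subtype.val_injective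
  have : Epi q := (ModuleCat.epi_iff_surjective _).2 (LinearMap.surjective_rangeRestrict _)
  obtain ⟨g, hg⟩ := h q (by rw [← cancel_mono ι, Category.assoc, hq]; simp)
  refine ⟨Projective.factorThru g q, ?_⟩
  have h2 : Projective.factorThru g q ≫ P.complex.d (i+1) i = g ≫ ι := by
    exact Projective.factorThru_comp_assoc g q ι
  rw [h2, ← Category.assoc, ← hg, Linear.smul_comp]
  rfl

theorem mem_caN_iff {M : ModuleCat.{u} R} (P : ProjectiveResolution M) (i : ℕ) (r : R)
    (hP : ∀ i, Module.Finite R (P.complex.X i)) :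
    r ∈ caN R (i+1) M ↔ SH P i r := by
  constructor
  · intro h
    have := hP (i+1)
    exact SH_of_cocyc P i r (h (i+1) le_rfl _
      (inferInstanceAs (Module.Finite R (LinearMap.range (P.complex.d (i+1) i).hom))))
  · intro h j hj N _ 
    obtain ⟨k, rfl⟩ := Nat.exists_eq_add_of_le hj
    have : SH P (i+k) r := by
      induction k with
      | zero => exact h
      | succ k ih => exact SH_succ P _ r (ih (by omega))
    rw [show i+1+k = i+k+1 by omega]
    exact SH_cocyc P _ r this N

theorem projDimLE_iff {M : ModuleCat.{u} R} (P : ProjectiveResolution M) (i : ℕ) :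
    projDimLE R i M ↔ SH P i 1 := by
  constructor
  · intro h
    refine SH_of_cocyc P i 1 (fun x => ?_)
    have := h (i+1) (by omega) (ModuleCat.of R (LinearMap.range (P.complex.d (i+1) i).hom))
    exact Subsingleton.elim _ _
  · intro h j hj N
    obtain ⟨k, rfl⟩ := Nat.exists_eq_add_of_le (show i + 1 ≤ j from hj)
    have : SH P (i+k) 1 := by
      clear hj
      induction k with
      | zero => exact h
      | succ k ih => exact SH_succ P _ _ ih
    rw [show i+1+k = i+k+1 by omega]
    refine ⟨fun x y => ?_⟩
    rw [← one_smul R x, ← one_smul R y, SH_cocyc P _ 1 this N, SH_cocyc P _ 1 this N]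

theorem projDimLE_iso {M M' : ModuleCat.{u} R} (e : M ≅ M') (i : ℕ) 
    (h : projDimLE R i M) : projDimLE R i M' := by
  intro j hj N
  have := h j hj N
  exact (((Ext R (ModuleCat.{u} R) j).mapIso e.op).app N).toLinearEquiv.toEquiv.subsingleton
end cocyc

section loc
open CategoryTheory Limits
variable {R : Type u} [CommRing R]

theorem mapExt_comp (S : Submonoid R) {X Y Z X' Y' Z' : Type u}
    [AddCommGroup X] [AddCommGroup Y] [AddCommGroup Z]
    [AddCommGroup X'] [AddCommGroup Y'] [AddCommGroup Z']
    [Module R X] [Module R Y] [Module R Z] [Module R X'] [Module R Y'] [Module R Z']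
    [Module (Localization S) X'] [Module (Localization S) Y'] [Module (Localization S) Z']
    [IsScalarTower R (Localization S) X'] [IsScalarTower R (Localization S) Y']
    [IsScalarTower R (Localization S) Z']
    (fX : X →ₗ[R] X') (fY : Y →ₗ[R] Y') (fZ : Z →ₗ[R] Z')
    [IsLocalizedModule S fX] [IsLocalizedModule S fY] [IsLocalizedModule S fZ]
    (a : X →ₗ[R] Y) (b : Y →ₗ[R] Z) :
    IsLocalizedModule.mapExtendScalars S fX fZ (Localization S) (b ∘ₗ a) =
    IsLocalizedModule.mapExtendScalars S fY fZ (Localization S) b ∘ₗ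
      IsLocalizedModule.mapExtendScalars S fX fY (Localization S) a := by
  ext x
  simp [IsLocalizedModule.map_comp' S _ fY]

theorem loc_SH (S : Submonoid R) {X Y X' Y' : Type u}
    [AddCommGroup X] [AddCommGroup Y] [AddCommGroup X'] [AddCommGroup Y']
    [Module R X] [Module R Y] [Module R X'] [Module R Y']
    [Module (Localization S) X'] [Module (Localization S) Y']
    [IsScalarTower R (Localization S) X'] [IsScalarTower R (Localization S) Y']
    (fX : X →ₗ[R] X') (fY : Y →ₗ[R] Y')
    [IsLocalizedModule S fX] [IsLocalizedModule S fY]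
    [Module.FinitePresentation R X] [Module.FinitePresentation R Y] (d : Y →ₗ[R] X) :
    (∃ h : X' →ₗ[Localization S] Y',
      IsLocalizedModule.mapExtendScalars S fY fX (Localization S) d ∘ₗ h ∘ₗ
        IsLocalizedModule.mapExtendScalars S fY fX (Localization S) d =
      IsLocalizedModule.mapExtendScalars S fY fX (Localization S) d) ↔
    ∃ r ∈ S, ∃ h : X →ₗ[R] Y, d ∘ₗ h ∘ₗ d = r • d := by
  constructor
  · rintro ⟨h, hh⟩
    obtain ⟨⟨h0, s⟩, hs⟩ := IsLocalizedModule.surj S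
      (IsLocalizedModule.mapExtendScalars S fX fY (Localization S)) h
    have key : IsLocalizedModule.mapExtendScalars S fY fX (Localization S) (d ∘ₗ h0 ∘ₗ d) =
        IsLocalizedModule.mapExtendScalars S fY fX (Localization S) (s.1 • d) := by
      rw [mapExt_comp S fY fY fX, mapExt_comp S fY fX fY, ← hs, map_smul, Submonoid.smul_def]
      conv_rhs => rw [← hh]
      ext x
      simp
    obtain ⟨t, ht⟩ := IsLocalizedModule.exists_of_eq (S := S) key
    refine ⟨t.1 * s.1, S.mul_mem t.2 s.2, t.1 • h0, ?_⟩
    rw [Submonoid.smul_def, Submonoid.smul_def] at ht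
    rw [mul_smul, ← ht]
    ext x
    simp
  · rintro ⟨r, hr, h, hh⟩
    let u : Localization S := IsLocalization.mk' _ 1 (⟨r, hr⟩ : S)
    have hu : u * algebraMap R _ r = 1 := by
      simp [u]
    refine ⟨u • IsLocalizedModule.mapExtendScalars S fX fY (Localization S) h, ?_⟩
    have key := congrArg (IsLocalizedModule.mapExtendScalars S fY fX (Localization S)) hh
    rw [mapExt_comp S fY fY fX, mapExt_comp S fY fX fY, map_smul] at key
    rw [LinearMap.smul_comp, LinearMap.comp_smul, key, ← algebraMap_smul (Localization S) r,
      smul_smul, hu, one_smul]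

theorem SH_loc {M : ModuleCat.{u} R} (S : Submonoid R) (P : ProjectiveResolution M) (i : ℕ)
    [IsNoetherianRing R] (hP : ∀ i, Module.Finite R (P.complex.X i)) :
    SH ((ModuleCat.localizedModuleFunctor S).mapProjectiveResolution P) i 1 ↔
      ∃ r ∈ S, SH P i r := by
  have h0 := hP i
  have h1 := hP (i+1)
  have : Module.FinitePresentation R (P.complex.X i) := Module.finitePresentation_of_finite R _
  have : Module.FinitePresentation R (P.complex.X (i+1)) :=
    Module.finitePresentation_of_finite R _
  have key := loc_SH S (ModuleCat.localizedModuleMkLinearMap (P.complex.X i) S)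
    (ModuleCat.localizedModuleMkLinearMap (P.complex.X (i+1)) S) (P.complex.d (i+1) i).hom
  constructor
  · rintro ⟨h, hh⟩
    rw [one_smul] at hh
    obtain ⟨r, hr, g, hg⟩ := key.1 ⟨h.hom, congrArg ModuleCat.Hom.hom hh⟩
    exact ⟨r, hr, ModuleCat.ofHom g, ModuleCat.hom_ext hg⟩
  · rintro ⟨r, hr, h, hh⟩
    obtain ⟨g, hg⟩ := key.2 ⟨r, hr, h.hom, congrArg ModuleCat.Hom.hom hh⟩
    refine ⟨ModuleCat.ofHom g, ?_⟩
    rw [one_smul]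
    exact ModuleCat.hom_ext hg

noncomputable def locIso (p : PrimeSpectrum R) (M : ModuleCat.{u} R) :
    M.localizedModule p.asIdeal.primeCompl ≅ locMod R p M :=
  LinearEquiv.toModuleIso (Shrink.linearEquiv.{u} (Localization p.asIdeal.primeCompl) _)
end loc

/-- `{p | pd_{R_p} M_p ≥ n} = V(ca_R^n(M))` for `n ≥ 1`. -/
theorem stmt2 (R : Type u) [CommRing R] [IsNoetherianRing R]
    (M : ModuleCat.{u} R) [Module.Finite R M] (n : ℕ) (hn : 1 ≤ n) :
    {p : PrimeSpectrum R |
        ¬ projDimLE (Localization.AtPrime p.asIdeal) (n - 1) (locMod R p M)} =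
      {p : PrimeSpectrum R | (caN R n M : Set R) ⊆ p.asIdeal} := by
  obtain ⟨i, rfl⟩ : ∃ i, n = i + 1 := ⟨n - 1, by omega⟩
  have hP := fres_fin M ‹_›
  ext p
  rw [Set.mem_ofPred_eq, Set.mem_ofPred_eq, not_iff_comm, Nat.add_sub_cancel]
  have h1 : projDimLE (Localization.AtPrime p.asIdeal) i (locMod R p M) ↔
      SH ((ModuleCat.localizedModuleFunctor p.asIdeal.primeCompl).mapProjectiveResolution
        (fres M)) i 1 := by
    rw [← projDimLE_iff]
    exact ⟨projDimLE_iso (locIso p M).symm i, projDimLE_iso (locIso p M) i⟩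
  rw [h1, SH_loc _ _ _ hP, Set.not_subset]
  constructor
  · rintro ⟨r, hr, hp⟩
    exact ⟨r, hp, (mem_caN_iff (fres M) i r hP).1 hr⟩
  · rintro ⟨r, hr, hp⟩
    exact ⟨r, (mem_caN_iff (fres M) i r hP).2 hp, hr⟩
end

section
/- Let R be a commutative Noetherian ring and M a finitely generated R-module. Then IPD(M) = V(ca_R(M)), where IPD(M) = {p ∈ Spec(R) : pd_{R_p}(M_p) = ∞} is the infinite projective dimension locus of M. -/
open CategoryTheory

theorem iso_ann {A : Type u} [CommRing A] {X Y : ModuleCat.{u} A} (i : X ≅ Y) (r : A) :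
    (∀ x : X, r • x = 0) ↔ ∀ y : Y, r • y = 0 := by
  have e : X ≃ₗ[A] Y := i.toLinearEquiv
  constructor
  · intro h x
    have := congrArg e (h (e.symm x))
    rw [map_smul, map_zero] at this
    simpa only [LinearEquiv.apply_symm_apply] using this
  · intro h x
    have := congrArg e.symm (h (e x))
    rw [map_smul, map_zero] at this
    simpa only [LinearEquiv.symm_apply_apply] using this

theorem sc_ann {A : Type u} [CommRing A] (S : ShortComplex (ModuleCat.{u} A)) (r : A) :
    (∀ x : S.homology, r • x = 0) ↔ ∀ y : S.X₂, S.g y = 0 → ∃ z : S.X₁, S.f z = r • y := by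
  rw [iso_ann S.moduleCatHomologyIso]
  constructor
  · intro h y hy
    have := h (Submodule.Quotient.mk (⟨y, hy⟩ : LinearMap.ker S.g.hom))
    have := (Submodule.Quotient.mk_eq_zero (LinearMap.range S.moduleCatToCycles)
      (x := r • (⟨y, hy⟩ : LinearMap.ker S.g.hom))).1 this
    obtain ⟨z, hz⟩ := this
    exact ⟨z, congrArg Subtype.val hz⟩
  · intro h x
    obtain ⟨⟨y, hy⟩, rfl⟩ := Submodule.Quotient.mk_surjective _ x
    obtain ⟨z, hz⟩ := h y hy
    exact (Submodule.Quotient.mk_eq_zero (LinearMap.range S.moduleCatToCycles)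
      (x := r • (⟨y, hy⟩ : LinearMap.ker S.g.hom))).2 ⟨z, Subtype.ext hz⟩

theorem ext_ann {A : Type u} [CommRing A] {M : ModuleCat.{u} A} (P : ProjectiveResolution M)
    (N : ModuleCat.{u} A) (n : ℕ) (r : A) :
    (∀ x : ExtM A (n + 1) M N, r • x = 0) ↔
      ∀ f : P.complex.X (n + 1) ⟶ N, P.complex.d (n + 2) (n + 1) ≫ f = 0 →
        ∃ g : P.complex.X n ⟶ N, P.complex.d (n + 1) n ≫ g = r • f := by
  let K := P.complex.linearYonedaObj A N
  let e1 : ExtM A (n + 1) M N ≅ (K.sc' n (n + 1) (n + 2)).homology :=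
    P.isoExt (n + 1) N ≪≫ ShortComplex.homologyMapIso (K.isoSc' n (n + 1) (n + 2)
      (by simp) (by simp))
  rw [iso_ann e1, sc_ann]
  rfl

theorem fg_projective_s5 {A : Type u} [CommRing A] [IsNoetherianRing A] (X : FGModuleCat.{u} A)
    [Module.Projective A X] : Projective X := by
  constructor
  intro E Y f e he
  have h1 : Epi ((forget₂ (FGModuleCat.{u} A) (ModuleCat.{u} A)).map e) := inferInstance
  have hs : Function.Surjective e.hom.hom := (ModuleCat.epi_iff_surjective _).1 h1
  obtain ⟨g, hg⟩ := Module.projective_lifting_property e.hom.hom f.hom.hom hs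
  refine ⟨FGModuleCat.ofHom g, ?_⟩
  ext x
  exact LinearMap.congr_fun hg x

theorem fg_cover {A : Type u} [CommRing A] [IsNoetherianRing A] (X : FGModuleCat.{u} A) :
    ∃ (Y : FGModuleCat.{u} A) (g : Y ⟶ X), Module.Projective A Y ∧ Epi g := by
  have : Module.Finite A X := inferInstance
  obtain ⟨n, f, hf⟩ := Module.Finite.exists_fin' A X
  refine ⟨FGModuleCat.of A (Fin n → A), FGModuleCat.ofHom f, ?_, ?_⟩
  · exact inferInstanceAs (Module.Projective A (Fin n → A))
  · have : Epi ((forget₂ (FGModuleCat.{u} A) (ModuleCat.{u} A)).map (FGModuleCat.ofHom f)) :=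
      (ModuleCat.epi_iff_surjective _).2 hf
    exact (forget₂ (FGModuleCat.{u} A) (ModuleCat.{u} A)).epi_of_epi_map this

instance fg_enough_s5 {A : Type u} [CommRing A] [IsNoetherianRing A] :
    EnoughProjectives (FGModuleCat.{u} A) := by
  constructor
  intro X
  obtain ⟨Y, g, h1, h2⟩ := fg_cover X
  have h3 : Projective Y := fg_projective_s5 Y
  exact ⟨{ p := Y, projective := h3, f := g, epi := h2 }⟩

instance fg_pres {A : Type u} [CommRing A] [IsNoetherianRing A] :
    (forget₂ (FGModuleCat.{u} A) (ModuleCat.{u} A)).PreservesProjectiveObjects := by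
  constructor
  intro X hX
  obtain ⟨Y, g, h1, h2⟩ := fg_cover X
  have : Projective ((forget₂ (FGModuleCat.{u} A) (ModuleCat.{u} A)).obj Y) :=
    (IsProjective.iff_projective (R := A) Y).1 h1
  let r : Retract X Y := ⟨Projective.factorThru (𝟙 X) g, g, by simp⟩
  exact (r.map (forget₂ (FGModuleCat.{u} A) (ModuleCat.{u} A))).projective

theorem exists_fg_res {A : Type u} [CommRing A] [IsNoetherianRing A] (M : ModuleCat.{u} A)
    [Module.Finite A M] : ∃ P : ProjectiveResolution M, ∀ n, Module.Finite A (P.complex.X n) := by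
  let P := ProjectiveResolution.of (FGModuleCat.of A M)
  refine ⟨(forget₂ (FGModuleCat.{u} A) (ModuleCat.{u} A)).mapProjectiveResolution P, fun n => ?_⟩
  exact inferInstanceAs (Module.Finite A (P.complex.X n))

/-- multiplication by `r` is null-homotopic from degree `n` on. -/
def CondH {A : Type u} [CommRing A] (K : ChainComplex (ModuleCat.{u} A) ℕ) (n : ℕ) (r : A) : Prop :=
  ∃ h : K.X n ⟶ K.X (n + 1), K.d (n + 1) n ≫ h ≫ K.d (n + 1) n = r • K.d (n + 1) n

theorem condH_step {A : Type u} [CommRing A] {M : ModuleCat.{u} A} (P : ProjectiveResolution M)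
    (n : ℕ) (r : A) (h : P.complex.X n ⟶ P.complex.X (n + 1))
    (hh : P.complex.d (n + 1) n ≫ h ≫ P.complex.d (n + 1) n = r • P.complex.d (n + 1) n) :
    ∃ h' : P.complex.X (n + 1) ⟶ P.complex.X (n + 2),
      h' ≫ P.complex.d (n + 2) (n + 1) = r • 𝟙 _ - P.complex.d (n + 1) n ≫ h := by
  refine ⟨(P.exact_succ n).liftFromProjective (r • 𝟙 _ - P.complex.d (n + 1) n ≫ h) ?_,
    ShortComplex.Exact.liftFromProjective_comp _ _ _⟩
  simp [hh]

theorem condH_succ {A : Type u} [CommRing A] {M : ModuleCat.{u} A} (P : ProjectiveResolution M)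
    (n : ℕ) (r : A) (H : CondH P.complex n r) : CondH P.complex (n + 1) r := by
  obtain ⟨h, hh⟩ := H
  obtain ⟨h', hh'⟩ := condH_step P n r h hh
  exact ⟨h', by simp [hh']⟩

theorem condH_le {A : Type u} [CommRing A] {M : ModuleCat.{u} A} (P : ProjectiveResolution M)
    (n m : ℕ) (hnm : n ≤ m) (r : A) (H : CondH P.complex n r) : CondH P.complex m r := by
  induction m, hnm using Nat.le_induction with
  | base => exact H
  | succ m _ ih => exact condH_succ P m r ih

theorem condH_ann {A : Type u} [CommRing A] {M : ModuleCat.{u} A} (P : ProjectiveResolution M)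
    (n : ℕ) (r : A) (H : CondH P.complex n r) (N : ModuleCat.{u} A) :
    ∀ i, n < i → ∀ x : ExtM A i M N, r • x = 0 := by
  intro i hi
  obtain ⟨m, rfl⟩ : ∃ m, i = m + 1 := ⟨i - 1, by omega⟩
  rw [ext_ann P]
  intro f hf
  obtain ⟨h, hh⟩ := condH_le P n m (by omega) r H
  obtain ⟨h', hh'⟩ := condH_step P m r h hh
  refine ⟨h ≫ f, ?_⟩
  have := congrArg (· ≫ f) hh'
  simp only [Category.assoc, hf, Limits.comp_zero, Preadditive.sub_comp, Linear.smul_comp,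
    Category.id_comp] at this
  exact (sub_eq_zero.1 this.symm).symm

theorem condH_of_ann {A : Type u} [CommRing A] {M : ModuleCat.{u} A} (P : ProjectiveResolution M)
    (n : ℕ) (r : A)
    (H : ∀ x : ExtM A (n + 1) M
      (ModuleCat.of A (LinearMap.range (P.complex.d (n + 1) n).hom)), r • x = 0) :
    CondH P.complex n r := by
  rw [ext_ann P] at H
  have hz := P.complex.d_comp_d (n + 2) (n + 1) n
  obtain ⟨g, hg⟩ := H (ModuleCat.ofHom (P.complex.d (n + 1) n).hom.rangeRestrict) (by
    ext x
    exact congrArg (fun f => f.hom x) hz)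
  have hep : Epi (ModuleCat.ofHom (P.complex.d (n + 1) n).hom.rangeRestrict) :=
    (ModuleCat.epi_iff_surjective _).2 (LinearMap.surjective_rangeRestrict _)
  refine ⟨Projective.factorThru g (ModuleCat.ofHom (P.complex.d (n + 1) n).hom.rangeRestrict), ?_⟩
  have e : P.complex.d (n + 1) n = ModuleCat.ofHom (P.complex.d (n + 1) n).hom.rangeRestrict ≫
      ModuleCat.ofHom (Submodule.subtype _) := rfl
  have h2 : Projective.factorThru g (ModuleCat.ofHom (P.complex.d (n + 1) n).hom.rangeRestrict) ≫
      P.complex.d (n + 1) n = g ≫ ModuleCat.ofHom (Submodule.subtype _) := by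
    refine (congrArg (fun z => Projective.factorThru g
      (ModuleCat.ofHom (P.complex.d (n + 1) n).hom.rangeRestrict) ≫ z) e).trans ?_
    rw [← Category.assoc, Projective.factorThru_comp]
  rw [h2, ← Category.assoc, hg]
  rfl

theorem condH_loc {A : Type u} [CommRing A] {M : ModuleCat.{u} A} (P : ProjectiveResolution M)
    (S : Submonoid A) (n : ℕ) (r : A) (hr : r ∈ S) (H : CondH P.complex n r) :
    CondH ((ModuleCat.localizedModuleFunctor.{u} S).mapProjectiveResolution P).complex n 1 := by
  obtain ⟨h, hh⟩ := H
  have h1 := congrArg (ModuleCat.localizedModuleFunctor.{u} S).map hh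
  have lin : (ModuleCat.localizedModuleFunctor.{u} S).map (r • P.complex.d (n + 1) n) =
      (algebraMap A (Localization S) r) •
        (ModuleCat.localizedModuleFunctor.{u} S).map (P.complex.d (n + 1) n) := by
    ext x
    have h5 := congrArg (fun z => z x) (map_smul (IsLocalizedModule.mapExtendScalars S
      ((P.complex.X (n + 1)).localizedModuleMkLinearMap S)
      ((P.complex.X n).localizedModuleMkLinearMap S) (Localization S)) r
      (P.complex.d (n + 1) n).hom)
    refine h5.trans ?_
    exact (algebraMap_smul (Localization S) r
      (M := (P.complex.X n).localizedModule S) _).symm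
  rw [lin, Functor.map_comp, Functor.map_comp] at h1
  obtain ⟨v, hv⟩ := IsLocalization.map_units (Localization S) ⟨r, hr⟩
  refine ⟨(↑v⁻¹ : Localization S) • (ModuleCat.localizedModuleFunctor.{u} S).map h, ?_⟩
  have h2 := congrArg ((↑v⁻¹ : Localization S) • ·) h1
  simp only [← hv, smul_smul, Units.inv_mul] at h2
  rw [← Linear.comp_smul, ← Linear.smul_comp] at h2
  exact h2

theorem condH_of_loc {A : Type u} [CommRing A] [IsNoetherianRing A]
    {M : ModuleCat.{u} A} (P : ProjectiveResolution M) (hP : ∀ n, Module.Finite A (P.complex.X n))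
    (S : Submonoid A) (n : ℕ)
    (H : CondH ((ModuleCat.localizedModuleFunctor.{u} S).mapProjectiveResolution P).complex n 1) :
    ∃ r ∈ S, CondH P.complex n r := by
  obtain ⟨h, hh⟩ := H
  rw [one_smul] at hh
  have := hP n
  have := hP (n + 1)
  let X := P.complex.X n
  let Y := P.complex.X (n + 1)
  let d := P.complex.d (n + 1) n
  have : Module.FinitePresentation A X := Module.finitePresentation_of_finite A X
  let hl : X.localizedModule S →ₗ[Localization S] Y.localizedModule S := h.hom
  let g : X →ₗ[A] Y.localizedModule S :=
    (hl.restrictScalars A).comp (X.localizedModuleMkLinearMap S)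
  obtain ⟨k, s, hk⟩ := Module.FinitePresentation.exists_lift_of_isLocalizedModule S
    (Y.localizedModuleMkLinearMap S) g
  let dl : Y.localizedModule S →ₗ[Localization S] X.localizedModule S :=
    ((ModuleCat.localizedModuleFunctor.{u} S).map d).hom
  have hdl : ∀ y : Y, dl (Y.localizedModuleMkLinearMap S y) =
      X.localizedModuleMkLinearMap S (d.hom y) := by
    intro y
    exact IsLocalizedModule.map_apply S _ _ _ _
  have hhl : ∀ y, dl (hl (dl y)) = dl y := fun y => congrArg (fun f => f.hom y) hh
  obtain ⟨t, ht⟩ := Module.Finite.exists_smul_of_comp_eq_of_isLocalizedModule S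
    (X.localizedModuleMkLinearMap S) (d.hom ∘ₗ k ∘ₗ d.hom) (s • d.hom) (by
      ext y
      have hk' := LinearMap.congr_fun hk (d.hom y)
      simp only [LinearMap.comp_apply, LinearMap.smul_apply] at hk' ⊢
      have h3 : X.localizedModuleMkLinearMap S (s • d.hom y) =
        s • X.localizedModuleMkLinearMap S (d.hom y) := map_smul _ (s : A) _
      have h4 : dl (s • g (d.hom y)) = s • dl (g (d.hom y)) :=
        map_smul (dl.restrictScalars A) (s : A) _
      rw [h3, ← hdl, hk', h4]
      congr 1
      change dl (hl (X.localizedModuleMkLinearMap S (d.hom y))) = _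
      rw [← hdl, hhl])
  refine ⟨t * s, (t * s).2, ModuleCat.ofHom ((t : A) • k), ?_⟩
  ext y
  have := LinearMap.congr_fun ht y
  change d.hom ((t : A) • k (d.hom y)) = ((t : A) * s) • d.hom y
  rw [map_smul, mul_smul]
  exact this

/-- The shrunk localization is isomorphic to the localization. -/
theorem loc_iso {A : Type u} [CommRing A] (p : PrimeSpectrum A) (M : ModuleCat.{u} A) :
    Nonempty ((ModuleCat.localizedModuleFunctor.{u} p.asIdeal.primeCompl).obj M ≅ locMod A p M) :=
  ⟨(Shrink.linearEquiv.{u} (Localization p.asIdeal.primeCompl)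
    (LocalizedModule p.asIdeal.primeCompl M)).toModuleIso⟩

theorem pd_iff {A : Type u} [CommRing A] {M : ModuleCat.{u} A} (p : PrimeSpectrum A) (n : ℕ) :
    projDimLE (Localization.AtPrime p.asIdeal) n (locMod A p M) ↔
    ∀ i : ℕ, n < i → ∀ N : ModuleCat.{u} (Localization.AtPrime p.asIdeal),
      ∀ x : ExtM (Localization.AtPrime p.asIdeal) i
        ((ModuleCat.localizedModuleFunctor.{u} p.asIdeal.primeCompl).obj M) N,
        (1 : Localization.AtPrime p.asIdeal) • x = 0 := by
  obtain ⟨e⟩ := loc_iso p M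
  unfold projDimLE
  refine forall_congr' fun i => forall_congr' fun hi => forall_congr' fun N => ?_
  rw [← iso_ann (((Ext _ (ModuleCat.{u} (Localization.AtPrime p.asIdeal)) i).mapIso e.op).app N)]
  constructor
  · intro h x
    exact Subsingleton.elim _ _
  · intro h
    refine ⟨fun a b => ?_⟩
    have ha := h a
    have hb := h b
    rw [one_smul] at ha hb
    rw [ha, hb]

/-- `IPD(M) = V(ca_R(M))`. -/
theorem stmt5 (R : Type u) [CommRing R] [IsNoetherianRing R]
    (M : ModuleCat.{u} R) [Module.Finite R M] :
    {p : PrimeSpectrum R |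
        ∀ n : ℕ, ¬ projDimLE (Localization.AtPrime p.asIdeal) n (locMod R p M)} =
      {p : PrimeSpectrum R | ca R M ⊆ (p.asIdeal : Set R)} := by
  obtain ⟨P, hP⟩ := exists_fg_res M
  ext p
  rw [Set.mem_ofPred_eq, Set.mem_ofPred_eq]
  constructor
  · intro h r hr
    obtain ⟨n, hn⟩ := Set.mem_iUnion.1 hr
    by_contra hrp
    have hfin := hP n
    have hc : CondH P.complex n r := condH_of_ann P n r
      (hn (n + 1) (Nat.le_succ n) _ (inferInstanceAs
        (Module.Finite R (LinearMap.range (P.complex.d (n + 1) n).hom))))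
    have hc' := condH_loc P p.asIdeal.primeCompl n r hrp hc
    refine h n ((pd_iff p n).2 fun i hi N => ?_)
    exact condH_ann _ n 1 hc' N i hi
  · intro h n hn
    rw [pd_iff] at hn
    have hc := condH_of_ann ((ModuleCat.localizedModuleFunctor.{u}
      p.asIdeal.primeCompl).mapProjectiveResolution P) n 1 (hn (n + 1) (Nat.lt_succ_self n) _)
    obtain ⟨r, hr, hc'⟩ := condH_of_loc P hP _ n hc
    refine hr (h (Set.mem_iUnion.2 ⟨n + 1, ?_⟩))
    intro i hi N _
    exact condH_ann P n r hc' N i hi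
end

section
/- Let R be a commutative Noetherian ring. Then the annihilator of the singularity category of R equals the intersection of the cohomological annihilators of all finitely generated R-modules: ann_R D_sg(R) = ⋂_{M ∈ mod(R)} ca_R(M). -/
open CategoryTheory

attribute [local instance] HasDerivedCategory.standard

noncomputable section

/-- An object of the derived category is perfect if it is isomorphic to a bounded
complex of finitely generated projective modules. -/
def IsPerfect {R : Type u} [CommRing R] (X : DerivedCategory (ModuleCat.{u} R)) : Prop :=
  ∃ K : CochainComplex (ModuleCat.{u} R) ℤ,
    (∀ i : ℤ, Module.Finite R (K.X i) ∧ Module.Projective R (K.X i)) ∧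
    (∃ a b : ℤ, ∀ i : ℤ, (i < a ∨ b < i) → Subsingleton (K.X i)) ∧
    Nonempty (DerivedCategory.Q.obj K ≅ X)


open CategoryTheory CategoryTheory.Limits Pretriangulated in
lemma exists_map_of_kproj {R : Type u} [CommRing R] (K L : CochainComplex (ModuleCat.{u} R) ℤ)
    [K.IsKProjective] (φ : DerivedCategory.Q.obj K ⟶ DerivedCategory.Q.obj L) :
    ∃ f : K ⟶ L, DerivedCategory.Q.map f = φ := by
  obtain ⟨g, hg⟩ := (CochainComplex.IsKProjective.Qh_map_bijective K
    ((HomotopyCategory.quotient _ _).obj L)).surjective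
    ((DerivedCategory.quotientCompQhIso _).hom.app K ≫ φ ≫
      (DerivedCategory.quotientCompQhIso _).inv.app L)
  obtain ⟨f, rfl⟩ := (HomotopyCategory.quotient _ _).map_surjective g
  refine ⟨f, ?_⟩
  rw [← cancel_epi ((DerivedCategory.quotientCompQhIso _).hom.app K),
    ← DerivedCategory.quotientCompQhIso_hom_naturality, hg]
  simp

lemma kproj_of_bdd {R : Type u} [CommRing R] (K : CochainComplex (ModuleCat.{u} R) ℤ)
    (hK : ∀ i : ℤ, Module.Finite R (K.X i) ∧ Module.Projective R (K.X i))
    (b : ℤ) (hb : ∀ i : ℤ, b < i → Subsingleton (K.X i)) : K.IsKProjective := by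
  have : K.IsStrictlyLE b := by
    rw [CochainComplex.isStrictlyLE_iff]
    intro i hi
    have := hb i hi
    exact ModuleCat.isZero_of_subsingleton _
  have : ∀ i, Projective (K.X i) := fun i => by
    have := (hK i).2
    exact (IsProjective.iff_projective (K.X i)).1 this
  exact CochainComplex.isKProjective_of_projective K b

lemma isPerfect_iso {R : Type u} [CommRing R] {X Y : DerivedCategory (ModuleCat.{u} R)}
    (e : X ≅ Y) (h : IsPerfect X) : IsPerfect Y := by
  obtain ⟨K, h1, h2, ⟨e'⟩⟩ := h
  exact ⟨K, h1, h2, ⟨e' ≪≫ e⟩⟩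

lemma isPerfect_shift {R : Type u} [CommRing R] {X : DerivedCategory (ModuleCat.{u} R)}
    (n : ℤ) (h : IsPerfect X) : IsPerfect (X⟦n⟧) := by
  obtain ⟨K, h1, ⟨a, b, h2⟩, ⟨e'⟩⟩ := h
  refine ⟨K⟦n⟧, fun i => h1 (i + n), ⟨a - n, b - n, fun i hi => h2 (i + n) (by lia)⟩,
    ⟨(DerivedCategory.Q.commShiftIso n).app K ≪≫ (shiftFunctor _ n).mapIso e'⟩⟩

lemma isPerfect_cone {R : Type u} [CommRing R]
    (T : Pretriangulated.Triangle (DerivedCategory (ModuleCat.{u} R)))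
    (hT : T ∈ Pretriangulated.distinguishedTriangles)
    (h1 : IsPerfect T.obj₁) (h2 : IsPerfect T.obj₂) : IsPerfect T.obj₃ := by
  obtain ⟨K, hK, ⟨a, b, hab⟩, ⟨e⟩⟩ := h1
  obtain ⟨L, hL, ⟨a', b', hab'⟩, ⟨e'⟩⟩ := h2
  have := kproj_of_bdd K hK b (fun i hi => hab i (Or.inr hi))
  obtain ⟨f, hf⟩ := exists_map_of_kproj K L (e.hom ≫ T.mor₁ ≫ e'.inv)
  have E (i : ℤ) : Nonempty ((CochainComplex.mappingCone f).X i ≃ₗ[R] (K.X (i+1) × L.X i)) := by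
    refine ⟨(?_ : (CochainComplex.mappingCone f).X i ≅ ModuleCat.of R (K.X (i+1) × L.X i)).toLinearEquiv⟩
    exact (HomologicalComplex.homotopyCofiber.XIsoBiprod f i (i+1) (by simp)) ≪≫
      ModuleCat.biprodIsoProd _ _
  refine ⟨CochainComplex.mappingCone f, fun i => ?_, ⟨min (a-1) a', max b b', fun i hi => ?_⟩, ?_⟩
  · obtain ⟨E⟩ := E i
    have := (hK (i+1)).1
    have := (hK (i+1)).2
    have := (hL i).1
    have := (hL i).2
    exact ⟨Module.Finite.equiv E.symm, Module.Projective.of_equiv E.symm⟩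
  · obtain ⟨E⟩ := E i
    have := hab (i+1) (by lia)
    have := hab' i (by lia)
    exact E.toEquiv.subsingleton
  · have hD := DerivedCategory.mappingCone_triangle_distinguished f
    exact ⟨Pretriangulated.Triangle.π₃.mapIso
      (Pretriangulated.isoTriangleOfIso₁₂ _ _ hD hT e e' 
      (show DerivedCategory.Q.map f ≫ e'.hom = e.hom ≫ T.mor₁ by rw [hf]; simp))⟩

/-- perfect complexes as an object property -/
def perfP (R : Type u) [CommRing R] : ObjectProperty (DerivedCategory (ModuleCat.{u} R)) :=
  fun X => IsPerfect X

instance (R : Type u) [CommRing R] : (perfP R).IsClosedUnderIsomorphisms where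
  of_iso e h := isPerfect_iso e h

instance (R : Type u) [CommRing R] : (perfP R).IsStableUnderShift ℤ where
  isStableUnderShiftBy n := ⟨fun _ h => isPerfect_shift n h⟩

instance (R : Type u) [CommRing R] : (perfP R).IsTriangulatedClosed₃ :=
  ObjectProperty.IsTriangulatedClosed₃.mk' isPerfect_cone

instance (R : Type u) [CommRing R] : (perfP R).IsTriangulatedClosed₂ :=
  ObjectProperty.IsTriangulatedClosed₂.of_isTriangulatedClosed₃

lemma isPerfect_single {R : Type u} [CommRing R] (F : ModuleCat.{u} R) (c : ℤ)
    [Module.Finite R F] [Module.Projective R F] :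
    IsPerfect (DerivedCategory.Q.obj ((HomologicalComplex.single _ (ComplexShape.up ℤ) c).obj F)) := by
  have hne (i : ℤ) (hi : i ≠ c) : Subsingleton
      (((HomologicalComplex.single (ModuleCat R) (ComplexShape.up ℤ) c).obj F).X i) :=
    ModuleCat.subsingleton_of_isZero (HomologicalComplex.isZero_single_obj_X _ _ _ _ hi)
  refine ⟨_, fun i => ?_, ⟨c, c, fun i hi => hne i (by lia)⟩, ⟨Iso.refl _⟩⟩
  by_cases hi : i = c
  · subst hi
    let E := (HomologicalComplex.singleObjXSelf (ComplexShape.up ℤ) i F).toLinearEquiv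
    exact ⟨Module.Finite.equiv E.symm, Module.Projective.of_equiv E.symm⟩
  · have := hne i hi
    exact ⟨inferInstance, inferInstance⟩

instance (R : Type u) [CommRing R] : (perfP R).IsTriangulated where
  exists_zero := by
    refine ⟨_, ?_, isPerfect_single (ModuleCat.of R PUnit) 0⟩
    refine Functor.map_isZero _ (Functor.map_isZero _ (ModuleCat.isZero_of_subsingleton _))

lemma exists_surj_homology {R : Type u} [CommRing R] (K : CochainComplex (ModuleCat.{u} R) ℤ) (c : ℤ)
    (hK : Module.Finite R (K.homology c)) :
    ∃ (F : ModuleCat.{u} R) (_ : Module.Finite R F) (_ : Module.Projective R F)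
      (φ : (HomologicalComplex.single _ (ComplexShape.up ℤ) c).obj F ⟶ K),
      Epi (HomologicalComplex.homologyMap φ c) := by
  obtain ⟨n, f, hf⟩ := Module.Finite.exists_fin' R (K.homology c)
  let p : ModuleCat.of R (Fin n → R) ⟶ K.homology c := ModuleCat.ofHom f
  have hp : Epi p := (ModuleCat.epi_iff_surjective _).2 hf
  have hproj : Projective (ModuleCat.of R (Fin n → R)) :=
    (IsProjective.iff_projective (R := R) (Fin n → R)).1 inferInstance
  let p' := Projective.factorThru p (K.homologyπ c)
  have hp' : p' ≫ K.homologyπ c = p := Projective.factorThru_comp _ _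
  refine ⟨ModuleCat.of R (Fin n → R), inferInstanceAs (Module.Finite R (Fin n → R)),
    inferInstanceAs (Module.Projective R (Fin n → R)),
    HomologicalComplex.mkHomFromSingle (p' ≫ K.iCycles c) (by simp), ?_⟩
  set φ : (HomologicalComplex.single _ (ComplexShape.up ℤ) c).obj (ModuleCat.of R (Fin n → R)) ⟶ K :=
    HomologicalComplex.mkHomFromSingle (p' ≫ K.iCycles c) (by simp) with hφ
  have h1 : (HomologicalComplex.singleObjCyclesSelfIso (ComplexShape.up ℤ) c _).inv ≫
      HomologicalComplex.cyclesMap φ c = p' := by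
    rw [← cancel_mono (K.iCycles c), Category.assoc, HomologicalComplex.cyclesMap_i,
      HomologicalComplex.singleObjCyclesSelfIso_inv_iCycles_assoc, hφ,
      HomologicalComplex.mkHomFromSingle_f]
    simp
  have h2 : (HomologicalComplex.singleObjHomologySelfIso (ComplexShape.up ℤ) c _).inv ≫
      HomologicalComplex.homologyMap φ c = p := by
    rw [← HomologicalComplex.singleObjCyclesSelfIso_inv_homologyπ, Category.assoc,
      HomologicalComplex.homologyπ_naturality, reassoc_of% h1, hp']
  rw [← h2] at hp
  exact epi_of_epi ((HomologicalComplex.singleObjHomologySelfIso (ComplexShape.up ℤ) c _).inv) _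

lemma finite_of_exact_mid {R : Type u} [CommRing R] [IsNoetherianRing R]
    (S : ShortComplex (ModuleCat.{u} R)) (hS : S.Exact)
    (h1 : Module.Finite R S.X₁) (h3 : Module.Finite R S.X₃) : Module.Finite R S.X₂ := by
  have := isNoetherian_of_isNoetherianRing_of_finite R S.X₁
  have := isNoetherian_of_isNoetherianRing_of_finite R S.X₃
  have := isNoetherian_of_range_eq_ker S.f.hom S.g.hom
    ((ShortComplex.moduleCat_exact_iff_range_eq_ker S).1 hS)
  infer_instance

/-- The homology of an object in the derived category. -/
abbrev HH {R : Type u} [CommRing R] (X : DerivedCategory (ModuleCat.{u} R)) (i : ℤ) : ModuleCat.{u} R :=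
  (DerivedCategory.homologyFunctor (ModuleCat.{u} R) i).obj X

lemma step {R : Type u} [CommRing R] [IsNoetherianRing R] (a c : ℤ)
    (X : DerivedCategory (ModuleCat.{u} R))
    (hf : ∀ i, Module.Finite R (HH X i)) (ha : X.IsGE a) (hc : X.IsLE c) :
    ∃ (Y : DerivedCategory (ModuleCat.{u} R)) (s : X ⟶ Y), (perfP R).trW s ∧
      (∀ i, Module.Finite R (HH Y i)) ∧ Y.IsGE (min a (c - 1)) ∧ Y.IsLE (c - 1) := by
  let K := DerivedCategory.Q.objPreimage X
  let e : DerivedCategory.Q.obj K ≅ X := DerivedCategory.Q.objObjPreimageIso X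
  have hK : Module.Finite R (K.homology c) := by
    have := hf c
    exact Module.Finite.equiv ((DerivedCategory.homologyFunctor _ c).mapIso e.symm ≪≫
      (DerivedCategory.homologyFunctorFactors _ c).app K).toLinearEquiv
  obtain ⟨F, hF1, hF2, φ, hφ⟩ := exists_surj_homology K c hK
  let m := DerivedCategory.Q.map φ ≫ e.hom
  obtain ⟨Y, s, t, hT⟩ := Pretriangulated.distinguished_cocone_triangle m
  let G := DerivedCategory.Q.obj ((HomologicalComplex.single (ModuleCat.{u} R) (ComplexShape.up ℤ) c).obj F)
  have hG (i : ℤ) (hi : i ≠ c) : Limits.IsZero (HH G i) :=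
    (HomologicalComplex.isZero_single_obj_homology (ComplexShape.up ℤ) c F i hi).of_iso
      ((DerivedCategory.homologyFunctorFactors _ i).app _)
  have hGf (i : ℤ) : Module.Finite R (HH G i) := by
    by_cases hi : i = c
    · subst hi
      exact Module.Finite.equiv ((DerivedCategory.homologyFunctorFactors _ i).app _ ≪≫
        HomologicalComplex.singleObjHomologySelfIso (ComplexShape.up ℤ) i F).symm.toLinearEquiv
    · have := ModuleCat.subsingleton_of_isZero (hG i hi)
      infer_instance
  have ex (i : ℤ) := DerivedCategory.HomologySequence.exact₃ _ hT i (i+1) rfl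
  have zz (i : ℤ) (h1 : i + 1 ≠ c) (h2 : (DerivedCategory.homologyFunctor _ i).map s = 0) :
      Limits.IsZero (HH Y i) := by
    have h := ex i
    exact h.isZero_X₂ h2 ((hG (i+1) h1).eq_of_tgt _ _)
  refine ⟨Y, s, ObjectProperty.trW.mk' (perfP R) hT (isPerfect_single F c), fun i => ?_, ?_, ?_⟩
  · exact finite_of_exact_mid _ (ex i) (hf i) (hGf (i+1))
  · rw [DerivedCategory.isGE_iff] at ha ⊢
    intro i hi
    exact zz i (by lia) ((ha i (by lia)).eq_of_src _ _)
  · have hc' := hc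
    rw [DerivedCategory.isLE_iff] at hc ⊢
    intro i hi
    apply zz i (by lia)
    by_cases hic : i = c
    · subst hic
      refine (DerivedCategory.HomologySequence.epi_homologyMap_mor₁_iff _ hT i).1 ?_
      change Epi ((DerivedCategory.homologyFunctor _ i).map (DerivedCategory.Q.map φ ≫ e.hom))
      rw [Functor.map_comp]
      have : Epi ((DerivedCategory.homologyFunctor (ModuleCat.{u} R) i).map (DerivedCategory.Q.map φ)) := by
        have h := DerivedCategory.homologyFunctorFactors_hom_naturality φ i
        have h3 : Epi ((DerivedCategory.homologyFunctor (ModuleCat.{u} R) i).map (DerivedCategory.Q.map φ) ≫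
            (DerivedCategory.homologyFunctorFactors _ i).hom.app K) := by
          rw [h]
          have : Epi ((HomologicalComplex.homologyFunctor (ModuleCat.{u} R) (ComplexShape.up ℤ) i).map φ) := hφ
          exact @epi_comp _ _ _ _ _ _ _ _ this
        have := epi_comp ((DerivedCategory.homologyFunctor (ModuleCat.{u} R) i).map (DerivedCategory.Q.map φ) ≫
            (DerivedCategory.homologyFunctorFactors _ i).hom.app K)
            ((DerivedCategory.homologyFunctorFactors _ i).inv.app K)
        simpa using this
      exact epi_comp _ _
    · exact (hc i (by lia)).eq_of_src _ _

lemma steps {R : Type u} [CommRing R] [IsNoetherianRing R] (n : ℕ) : ∀ (a c : ℤ)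
    (X : DerivedCategory (ModuleCat.{u} R))
    (_ : ∀ i, Module.Finite R (HH X i)) (_ : X.IsGE a) (_ : X.IsLE c),
    ∃ (Y : DerivedCategory (ModuleCat.{u} R)) (s : X ⟶ Y), (perfP R).trW s ∧
      (∀ i, Module.Finite R (HH Y i)) ∧ Y.IsGE (min a (c - n)) ∧ Y.IsLE (c - n) := by
  induction n with
  | zero =>
    intro a c X hf ha hc
    refine ⟨X, 𝟙 X, MorphismProperty.id_mem _ _, hf, ?_, by simpa using hc⟩
    exact Triangulated.TStructure.isGE_of_ge _ X _ a (by simp)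
  | succ n ih =>
    intro a c X hf ha hc
    obtain ⟨Y, s, hs, hf, h1, h2⟩ := ih a c X hf ha hc
    obtain ⟨Z, t, ht, hf, h1, h2⟩ := step _ _ Y hf h1 h2
    refine ⟨Z, s ≫ t, MorphismProperty.comp_mem _ _ _ hs ht, hf, ?_, ?_⟩
    · convert h1 using 1
      push_cast
      lia
    · convert h2 using 1
      push_cast
      lia

lemma steps_single {R : Type u} [CommRing R] [IsNoetherianRing R] (n : ℕ) (a c : ℤ)
    (X : DerivedCategory (ModuleCat.{u} R))
    (hf : ∀ i, Module.Finite R (HH X i)) (ha : X.IsGE a) (hc : X.IsLE c) (hn : c - n ≤ a) :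
    ∃ (N : ModuleCat.{u} R) (_ : Module.Finite R N)
      (s : X ⟶ (DerivedCategory.singleFunctor _ (c - n)).obj N), (perfP R).trW s := by
  obtain ⟨Y, s, hs, hf, h1, h2⟩ := steps n a c X hf ha hc
  rw [min_eq_right hn] at h1
  obtain ⟨N, ⟨e⟩⟩ := DerivedCategory.exists_iso_singleFunctor_obj_of_isGE_of_isLE Y (c - n)
  refine ⟨N, ?_, s ≫ e.hom, MorphismProperty.RespectsIso.postcomp _ e.hom _ hs⟩
  have := hf (c - n)
  exact Module.Finite.equiv ((DerivedCategory.homologyFunctor _ (c-n)).mapIso e ≪≫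
    (DerivedCategory.singleFunctorCompHomologyFunctorIso _ (c-n)).app N).toLinearEquiv

lemma zero_of_isos {D : Type*} [Category D] [Preadditive D] {A B X Y : D} (e : A ≅ B) (e' : X ≅ Y)
    (f : B ⟶ X) (h : e.hom ≫ f ≫ e'.hom = 0) : f = 0 := by
  have : f = e.inv ≫ (e.hom ≫ f ≫ e'.hom) ≫ e'.inv := by simp
  rw [this, h]; simp

lemma homology_smul_iff {R : Type u} [CommRing R] (S : ShortComplex (ModuleCat.{u} R)) (r : R) :
    (∀ x : S.homology, r • x = 0) ↔
      ∀ z : S.X₂, S.g z = 0 → ∃ w : S.X₁, S.f w = r • z := by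
  let e : S.homology ≃ₗ[R] (LinearMap.ker S.g.hom ⧸ LinearMap.range S.moduleCatToCycles) :=
    S.moduleCatHomologyIso.toLinearEquiv
  constructor
  · intro h z hz
    let y : LinearMap.ker S.g.hom := ⟨z, hz⟩
    have h1 := h (e.symm (Submodule.Quotient.mk y))
    rw [← map_smul, LinearEquiv.map_eq_zero_iff] at h1
    rw [← Submodule.Quotient.mk_smul, Submodule.Quotient.mk_eq_zero] at h1
    obtain ⟨w, hw⟩ := h1
    exact ⟨w, congrArg Subtype.val hw⟩
  · intro h x
    obtain ⟨q, rfl⟩ := e.symm.surjective x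
    obtain ⟨y, rfl⟩ := Submodule.Quotient.mk_surjective _ q
    obtain ⟨w, hw⟩ := h y.1 y.2
    rw [← map_smul, LinearEquiv.map_eq_zero_iff]
    rw [← Submodule.Quotient.mk_smul, Submodule.Quotient.mk_eq_zero]
    exact ⟨w, Subtype.ext hw⟩

lemma ext_compare {R : Type u} [CommRing R] (M N : ModuleCat.{u} R) (r : R) (p : ℕ) :
    (∀ x : ExtM R (p + 1) M N, r • x = 0) ↔ ∀ e : Abelian.Ext M N (p + 1), r • e = 0 := by
  let P := projectiveResolution M
  let C := P.complex.linearYonedaObj R N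
  have h1 : (∀ x : ExtM R (p + 1) M N, r • x = 0) ↔
      ∀ x : (C.sc' p (p+1) (p+2)).homology, r • x = 0 := by
    let e : ExtM R (p + 1) M N ≃ₗ[R] _ := (P.isoExt (R := R) (p+1) N ≪≫
      C.homologyIsoSc' p (p+1) (p+2) (by simp) (by simp)).toLinearEquiv
    constructor
    · intro h x
      rw [← e.symm.map_eq_zero_iff, map_smul, h]
    · intro h x
      rw [← e.map_eq_zero_iff, map_smul, h]
  rw [h1, homology_smul_iff]
  have h2 : (∀ z : (C.sc' p (p+1) (p+2)).X₂, (C.sc' p (p+1) (p+2)).g z = 0 →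
      ∃ w : (C.sc' p (p+1) (p+2)).X₁, (C.sc' p (p+1) (p+2)).f w = r • z) ↔
    ∀ z : P.complex.X (p+1) ⟶ N, P.complex.d (p+2) (p+1) ≫ z = 0 →
      ∃ w : P.complex.X p ⟶ N, P.complex.d (p+1) p ≫ w = r • z := Iff.rfl
  rw [h2]
  have h3 (z : P.complex.X (p+1) ⟶ N) (hz : P.complex.d (p+2) (p+1) ≫ z = 0) :
      r • P.extMk z (p+2) rfl hz = 0 ↔ ∃ w : P.complex.X p ⟶ N, P.complex.d (p+1) p ≫ w = r • z := by
    rw [Abelian.Ext.smul_eq_comp_mk₀, P.extMk_comp_mk₀, P.extMk_eq_zero_iff _ _ _ _ p rfl]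
    simp
  constructor
  · intro h e
    obtain ⟨f, hf, rfl⟩ := P.extMk_surjective e (p+2) rfl
    exact (h3 f hf).2 (h f hf)
  · intro h z hz
    exact (h3 z hz).1 (h _)

lemma perfect_vanish {R : Type u} [CommRing R] (P : DerivedCategory (ModuleCat.{u} R)) (hP : IsPerfect P) :
    ∃ n : ℕ, ∀ i : ℕ, n ≤ i → ∀ N : ModuleCat.{u} R,
      ∀ f : P ⟶ ((DerivedCategory.singleFunctor _ 0).obj N)⟦(i : ℤ)⟧, f = 0 := by
  obtain ⟨K, h1, ⟨a, b, h2⟩, ⟨e⟩⟩ := hP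
  have := kproj_of_bdd K h1 b (fun i hi => h2 i (Or.inr hi))
  refine ⟨(1 - a).toNat, fun i hi N f => ?_⟩
  let e1 : ((DerivedCategory.singleFunctor (ModuleCat.{u} R) 0).obj N)⟦(i : ℤ)⟧ ≅
      DerivedCategory.Q.obj ((HomologicalComplex.single _ (ComplexShape.up ℤ) (-i)).obj N) :=
    ((DerivedCategory.singleFunctors (ModuleCat.{u} R)).shiftIso i (-i) 0 (by simp)).app N ≪≫
      (DerivedCategory.singleFunctorIsoCompQ _ (-i)).app N
  obtain ⟨g, hg⟩ := exists_map_of_kproj K _ (e.hom ≫ f ≫ e1.hom)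
  have hg0 : g = 0 := by
    apply HomologicalComplex.to_single_hom_ext
    have := h2 (-i) (Or.inl (by lia))
    exact (ModuleCat.isZero_of_subsingleton _).eq_of_src _ _
  rw [hg0, Functor.map_zero] at hg
  exact zero_of_isos e e1 f hg.symm

lemma single_homology_finite {R : Type u} [CommRing R] (M : ModuleCat.{u} R) [Module.Finite R M] (d i : ℤ) :
    Module.Finite R (((HomologicalComplex.single _ (ComplexShape.up ℤ) d).obj M).homology i) := by
  by_cases hi : i = d
  · subst hi
    exact Module.Finite.equiv
        (HomologicalComplex.singleObjHomologySelfIso (ComplexShape.up ℤ) i M).symm.toLinearEquiv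
  · have := ModuleCat.subsingleton_of_isZero
      (HomologicalComplex.isZero_single_obj_homology (ComplexShape.up ℤ) d M i hi)
    infer_instance

lemma subset_one {R : Type u} [CommRing R] (r : R) (M : ModuleCat.{u} R)
    (P : DerivedCategory (ModuleCat.{u} R)) (hP : IsPerfect P)
    (u : (DerivedCategory.singleFunctor _ 0).obj M ⟶ P) (v : P ⟶ (DerivedCategory.singleFunctor _ 0).obj M)
    (huv : u ≫ v = r • 𝟙 _) : r ∈ ca R M := by
  obtain ⟨n, hn⟩ := perfect_vanish P hP
  refine Set.mem_iUnion.2 ⟨n + 1, ?_⟩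
  intro i hi N _
  obtain ⟨p, rfl⟩ : ∃ p, i = p + 1 := ⟨i - 1, by lia⟩
  rw [ext_compare]
  intro e
  apply (Abelian.Ext.homLinearEquiv (R := R)).injective
  rw [map_smul, map_zero]
  generalize (Abelian.Ext.homLinearEquiv (R := R)) e = x
  have h := hn (p + 1) (by lia) N (v ≫ x)
  calc r • x = (r • 𝟙 _) ≫ x := by simp
    _ = u ≫ v ≫ x := by rw [← huv, Category.assoc]
    _ = 0 := by rw [h]; simp

lemma superset_kill {R : Type u} [CommRing R] (r : R) (N N' : ModuleCat.{u} R)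
    (p : ℕ) (h : ∀ x : ExtM R (p + 1) N N', r • x = 0) (d d' : ℤ) (hd : d' = d - (p + 1 : ℕ))
    (s : (DerivedCategory.singleFunctor _ d).obj N ⟶ (DerivedCategory.singleFunctor _ d').obj N') :
    r • s = 0 := by
  rw [ext_compare] at h
  let e1 := ((DerivedCategory.singleFunctors (ModuleCat.{u} R)).shiftIso d 0 d (by simp)).app N
  let e2 := ((DerivedCategory.singleFunctors (ModuleCat.{u} R)).shiftIso d (d' - d) d' (by simp)).app N'
  let e3 := ((DerivedCategory.singleFunctors (ModuleCat.{u} R)).shiftIso (p + 1 : ℕ) (d' - d) 0 (by lia)).app N'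
  have h0 (x : (DerivedCategory.singleFunctor _ 0).obj N ⟶
    ((DerivedCategory.singleFunctor _ 0).obj N')⟦((p + 1 : ℕ) : ℤ)⟧) : r • x = 0 := by
    have := h ((Abelian.Ext.homLinearEquiv (R := R)).symm x)
    rwa [← map_smul, LinearEquiv.map_eq_zero_iff] at this
  have h1 := h0 (e1.inv ≫ s⟦d⟧' ≫ e2.hom ≫ e3.inv)
  apply (shiftFunctor (DerivedCategory (ModuleCat.{u} R)) d).map_injective
  rw [Functor.map_smul, Functor.map_zero]
  refine zero_of_isos e1.symm (e2 ≪≫ e3.symm) _ ?_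
  rw [← h1, Linear.smul_comp, Linear.comp_smul]
  rfl


lemma factor_of_trW {R : Type u} [CommRing R] (r : R) (X Z : DerivedCategory (ModuleCat.{u} R))
    (s : X ⟶ Z) (hs : (perfP R).trW s) (h : r • s = 0) (f : X ⟶ X) :
    ∃ P : DerivedCategory (ModuleCat.{u} R), IsPerfect P ∧ ∃ (u : X ⟶ P) (v : P ⟶ X),
      u ≫ v = r • f := by
  rw [ObjectProperty.trW_iff'] at hs
  obtain ⟨P, a, b, hT, hP⟩ := hs
  obtain ⟨u, hu⟩ := Pretriangulated.Triangle.coyoneda_exact₂ _ hT (r • f) (by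
    change (r • f) ≫ s = 0
    rw [Linear.smul_comp, ← Linear.comp_smul, h, Limits.comp_zero])
  exact ⟨P, hP, u, a, hu.symm⟩

lemma superset {R : Type u} [CommRing R] [IsNoetherianRing R] (r : R)
    (h : ∀ M : ModuleCat.{u} R, Module.Finite R M → r ∈ ca R M)
    (X : DerivedCategory (ModuleCat.{u} R))
    (hf : ∀ i, Module.Finite R (HH X i)) (a c : ℤ) (ha : X.IsGE a) (hc : X.IsLE c) (f : X ⟶ X) :
    ∃ P : DerivedCategory (ModuleCat.{u} R), IsPerfect P ∧ ∃ (u : X ⟶ P) (v : P ⟶ X),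
      u ≫ v = r • f := by
  obtain ⟨N, hN, s, hs⟩ := steps_single (c - a).toNat a c X hf ha hc (by lia)
  generalize c - (c - a).toNat = d at s hs
  obtain ⟨n, hn⟩ := Set.mem_iUnion.1 (h N hN)
  obtain ⟨N', hN', s', hs'⟩ := steps_single (n + 1) d d ((DerivedCategory.singleFunctor _ d).obj N)
    (fun i => by
      have : Module.Finite R ((HomologicalComplex.homologyFunctor (ModuleCat.{u} R) (ComplexShape.up ℤ) i).obj
          ((HomologicalComplex.single _ (ComplexShape.up ℤ) d).obj N)) := single_homology_finite N d i
      exact Module.Finite.equiv ((DerivedCategory.homologyFunctor _ i).mapIso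
        ((DerivedCategory.singleFunctorIsoCompQ _ d).app N) ≪≫
        (DerivedCategory.homologyFunctorFactors _ i).app
          ((HomologicalComplex.single _ (ComplexShape.up ℤ) d).obj N)).symm.toLinearEquiv)
    inferInstance inferInstance (by lia)
  have h0 := superset_kill r N N' n (hn (n+1) (by lia) N' hN') d _ rfl s'
  refine factor_of_trW r X _ (s ≫ s') (MorphismProperty.comp_mem _ _ _ hs hs') ?_ f
  rw [← Linear.comp_smul, h0, Limits.comp_zero]

lemma subset {R : Type u} [CommRing R] (r : R)
    (h : ∀ K : CochainComplex (ModuleCat.{u} R) ℤ,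
        (∀ i : ℤ, Module.Finite R (K.homology i)) →
        (∃ a b : ℤ, ∀ i : ℤ, (i < a ∨ b < i) → Subsingleton (K.homology i)) →
        ∀ f : DerivedCategory.Q.obj K ⟶ DerivedCategory.Q.obj K,
          ∃ P : DerivedCategory (ModuleCat.{u} R), IsPerfect P ∧
            ∃ (u : DerivedCategory.Q.obj K ⟶ P) (v : P ⟶ DerivedCategory.Q.obj K),
              u ≫ v = f ≫ DerivedCategory.Q.map (r • 𝟙 K))
    (M : ModuleCat.{u} R) (hM : Module.Finite R M) : r ∈ ca R M := by
  obtain ⟨P, hP, u, v, huv⟩ := h ((HomologicalComplex.single _ (ComplexShape.up ℤ) 0).obj M)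
    (single_homology_finite M 0)
    ⟨0, 0, fun i hi => ModuleCat.subsingleton_of_isZero
      (HomologicalComplex.isZero_single_obj_homology (ComplexShape.up ℤ) 0 M i (by lia))⟩ (𝟙 _)
  have e : (DerivedCategory.singleFunctor (ModuleCat.{u} R) 0).obj M ≅
      DerivedCategory.Q.obj ((HomologicalComplex.single _ (ComplexShape.up ℤ) 0).obj M) :=
    (DerivedCategory.singleFunctorIsoCompQ (ModuleCat.{u} R) 0).app M
  refine subset_one r M P hP (e.hom ≫ u) (v ≫ e.inv) ?_
  rw [Functor.map_smul, CategoryTheory.Functor.map_id, Category.id_comp] at huv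
  have : (e.hom ≫ u) ≫ v ≫ e.inv = e.hom ≫ (u ≫ v) ≫ e.inv := by simp only [Category.assoc]
  rw [this, huv, Linear.smul_comp, Linear.comp_smul]
  rw [Category.id_comp, e.hom_inv_id]

/-- the annihilator of the singularity category, i.e. the set of
`r` such that for every object `X` of `D^f(R)` and every endomorphism `f` of
`X`, the morphism `r • f` vanishes in `D_sg(R)` (equivalently, factors through
a perfect complex), coincides with `⋂_{M ∈ mod R} ca_R(M)`. -/
theorem stmt8 (R : Type u) [CommRing R] [IsNoetherianRing R] :
    {r : R | ∀ K : CochainComplex (ModuleCat.{u} R) ℤ,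
        (∀ i : ℤ, Module.Finite R (K.homology i)) →
        (∃ a b : ℤ, ∀ i : ℤ, (i < a ∨ b < i) → Subsingleton (K.homology i)) →
        ∀ f : DerivedCategory.Q.obj K ⟶ DerivedCategory.Q.obj K,
          ∃ P : DerivedCategory (ModuleCat.{u} R), IsPerfect P ∧
            ∃ (u : DerivedCategory.Q.obj K ⟶ P) (v : P ⟶ DerivedCategory.Q.obj K),
              u ≫ v = f ≫ DerivedCategory.Q.map (r • 𝟙 K)} =
      {r : R | ∀ M : ModuleCat.{u} R, Module.Finite R M → r ∈ ca R M} := by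
  
  ext r
  constructor
  · intro h M hM
    exact subset r h M hM
  · intro h K hK hb f
    obtain ⟨a, b, hb⟩ := hb
    rw [Functor.map_smul, CategoryTheory.Functor.map_id, Linear.comp_smul, Category.comp_id]
    refine superset r h _ (fun i => ?_) a b ?_ ?_ f
    · have : Module.Finite R ((HomologicalComplex.homologyFunctor (ModuleCat.{u} R) (ComplexShape.up ℤ) i).obj K) := hK i
      exact Module.Finite.equiv
        ((DerivedCategory.homologyFunctorFactors _ i).app K).symm.toLinearEquiv
    · rw [DerivedCategory.isGE_iff]
      intro i hi
      have := hb i (Or.inl hi)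
      exact (ModuleCat.isZero_of_subsingleton (K.homology i)).of_iso
        ((DerivedCategory.homologyFunctorFactors _ i).app K)
    · rw [DerivedCategory.isLE_iff]
      intro i hi
      have := hb i (Or.inr hi)
      exact (ModuleCat.isZero_of_subsingleton (K.homology i)).of_iso
        ((DerivedCategory.homologyFunctorFactors _ i).app K)

end
end

section
/- Let R be a commutative Noetherian ring and M a finitely generated R-module. Then V(ca_R(M)) ⊆ Sing(R), where Sing(R) = {p ∈ Spec(R) : R_p is not regular}. -/
open CategoryTheory

section
universe u
open IsLocalRing

def RegD (A : Type u) [CommRing A] [IsLocalRing A] (d : ℕ) : Prop :=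
  ∃ s : Finset A, s.card ≤ d ∧ Ideal.span (s : Set A) = maximalIdeal A ∧
    (d : WithBot ℕ∞) ≤ ringKrullDim A

lemma nontrivial_quot {A : Type u} [CommRing A] [IsLocalRing A] {x : A} (hx : x ∈ maximalIdeal A) :
    Nontrivial (A ⧸ Ideal.span {x}) := by
  apply Ideal.Quotient.nontrivial_iff.2
  intro h
  have : Ideal.span {x} ≤ maximalIdeal A := by
    rw [Ideal.span_singleton_le_iff_mem]; exact hx
  rw [h] at this
  exact (maximalIdeal.isMaximal A).ne_top (top_le_iff.1 this)

lemma isLocalRing_quot {A : Type u} [CommRing A] [IsLocalRing A] {x : A}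
    (hx : x ∈ maximalIdeal A) : IsLocalRing (A ⧸ Ideal.span {x}) :=
  have := nontrivial_quot hx
  IsLocalRing.of_surjective' (Ideal.Quotient.mk _) Ideal.Quotient.mk_surjective

lemma RegD.quot {A : Type u} [CommRing A] [IsLocalRing A] [IsNoetherianRing A] {d : ℕ}
    (h : RegD A (d + 1)) {x : A} (hx : x ∈ maximalIdeal A) (hx2 : x ∉ maximalIdeal A ^ 2)
    [IsLocalRing (A ⧸ Ideal.span {x})] : RegD (A ⧸ Ideal.span {x}) d := by
  classical
  obtain ⟨s, hc, hs, hd⟩ := h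
  have hx' : x ∈ Submodule.span A (s : Set A) := by
    change x ∈ Ideal.span (s : Set A)
    rw [hs]; exact hx
  obtain ⟨c, -, hcx⟩ := Submodule.mem_span_finset.1 hx'
  obtain ⟨a, has, hau⟩ : ∃ a ∈ s, IsUnit (c a) := by
    by_contra! hcon
    apply hx2
    rw [← hcx, pow_two]
    refine Ideal.sum_mem _ fun a ha => Ideal.mul_mem_mul ?_ ?_
    · exact (mem_maximalIdeal _).2 (hcon a ha)
    · rw [← hs]; exact Ideal.subset_span ha
  refine ⟨(s.erase a).image (Ideal.Quotient.mk _), ?_, ?_, ?_⟩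
  · refine Finset.card_image_le.trans ?_
    rw [Finset.card_erase_of_mem has]; omega
  · have hmap : maximalIdeal (A ⧸ Ideal.span {x}) = (maximalIdeal A).map (Ideal.Quotient.mk _) := by
      have hsur : Function.Surjective (Ideal.Quotient.mk (Ideal.span {x})) :=
        Ideal.Quotient.mk_surjective
      have h1 := IsLocalRing.eq_maximalIdeal
        (Ideal.comap_isMaximal_of_surjective _ hsur (K := maximalIdeal (A ⧸ Ideal.span {x})))
      rw [← h1, Ideal.map_comap_of_surjective _ hsur]
    rw [hmap, ← hs, Ideal.map_span, Finset.coe_image]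
    apply le_antisymm
    · exact Ideal.span_mono (Set.image_mono (by simp))
    · rw [Ideal.span_le]
      rintro _ ⟨b, hb, rfl⟩
      by_cases hba : b = a
      · subst hba
        have h0 : (Ideal.Quotient.mk (Ideal.span {x})) x = 0 :=
          Ideal.Quotient.eq_zero_iff_mem.2 (Ideal.mem_span_singleton_self x)
        have h1 : c b * b + ∑ y ∈ s.erase b, c y • y = x := by
          rw [← hcx, ← Finset.add_sum_erase _ _ has, smul_eq_mul]
        replace h0 := (congrArg (Ideal.Quotient.mk (Ideal.span {x})) h1).trans h0
        rw [map_add, map_mul, add_eq_zero_iff_eq_neg] at h0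
        have hm : (Ideal.Quotient.mk (Ideal.span {x})) (c b) * (Ideal.Quotient.mk (Ideal.span {x})) b ∈
            Ideal.span ((Ideal.Quotient.mk (Ideal.span {x})) '' ((s.erase b : Finset A) : Set A)) := by
          rw [h0]
          apply neg_mem
          rw [map_sum]
          refine Ideal.sum_mem _ fun i hi => ?_
          rw [smul_eq_mul, map_mul]
          exact Ideal.mul_mem_left _ _ (Ideal.subset_span ⟨i, hi, rfl⟩)
        exact (Ideal.unit_mul_mem_iff_mem _ (hau.map _)).1 hm
      · exact Ideal.subset_span ⟨b, by simpa [hba] using hb, rfl⟩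
  · have := ringKrullDim_le_ringKrullDim_quotient_add_card ({x} : Finset A) (by
      simpa [IsLocalRing.ringJacobson_eq_maximalIdeal] using hx)
    have h2 := hd.trans this
    rw [Finset.coe_singleton] at h2
    simp only [Finset.card_singleton, Nat.cast_add, Nat.cast_one] at h2
    exact (ENat.WithBot.add_le_add_one_right_iff).1 h2

lemma RegD.field {A : Type u} [CommRing A] [IsLocalRing A] (h : RegD A 0) : IsField A := by
  obtain ⟨s, hc, hs, hd⟩ := h
  have : s = ∅ := by simpa using hc
  subst this
  rw [isField_iff_maximalIdeal_eq]
  rw [← hs]; simp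

lemma RegD.not_le {A : Type u} [CommRing A] [IsLocalRing A] [IsNoetherianRing A] {d : ℕ}
    (h : RegD A (d + 1)) {q : Ideal A} (hq : q ∈ minimalPrimes A) : ¬ maximalIdeal A ≤ q := by
  intro hle
  obtain ⟨s, hc, hs, hd⟩ := h
  have hqp : q.IsPrime := hq.1.1
  have : q = maximalIdeal A := le_antisymm (le_maximalIdeal hqp.ne_top) hle
  have h0 : q.height = 0 := Ideal.height_eq_zero_iff.2 hq
  rw [this] at h0
  rw [← maximalIdeal_height_eq_ringKrullDim, h0] at hd
  norm_cast at hd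

lemma RegD.exists {A : Type u} [CommRing A] [IsLocalRing A] [IsNoetherianRing A] {d : ℕ}
    (h : RegD A (d + 1)) : ∃ x ∈ maximalIdeal A, x ∉ maximalIdeal A ^ 2 ∧
      ∀ q ∈ minimalPrimes A, x ∉ q := by
  by_contra! hcon
  have hfin : (minimalPrimes A).Finite := minimalPrimes.finite_of_isNoetherianRing A
  have := (Ideal.subset_union_prime_finite (hfin.insert (maximalIdeal A ^ 2)) (f := id)
    (maximalIdeal A ^ 2) (maximalIdeal A ^ 2) (I := maximalIdeal A) (by
      rintro i (rfl | hi) h1 h2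
      · exact absurd rfl h1
      · exact hi.1.1)).1 (by
      intro x hx
      by_cases hx2 : x ∈ maximalIdeal A ^ 2
      · exact Set.mem_biUnion (Set.mem_insert _ _) hx2
      · obtain ⟨q, hq, hxq⟩ := hcon x hx hx2
        exact Set.mem_biUnion (Set.mem_insert_of_mem _ hq) hxq)
  have key : ¬ maximalIdeal A ≤ maximalIdeal A ^ 2 := by
    intro hle
    have hbot : maximalIdeal A = ⊥ := by
      apply Submodule.eq_bot_of_le_smul_of_le_jacobson_bot (maximalIdeal A) _
        (IsNoetherian.noetherian _)
      · rw [smul_eq_mul, ← pow_two]; exact hle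
      · exact maximalIdeal_le_jacobson _
    obtain ⟨q, hq⟩ := Ideal.nonempty_minimalPrimes (I := (⊥ : Ideal A)) bot_ne_top
    exact h.not_le hq (by rw [hbot]; exact bot_le)
  obtain ⟨q, (rfl | hq), hle⟩ := this
  · exact key hle
  · exact h.not_le hq hle

lemma RegD.isDomain (d : ℕ) : ∀ (A : Type u) [CommRing A] [IsLocalRing A] [IsNoetherianRing A]
    (_ : RegD A d), IsDomain A := by
  induction d with
  | zero => intro A _ _ _ h; exact h.field.isDomain
  | succ d ih =>
    intro A _ _ _ h
    obtain ⟨x, hx, hx2, hxq⟩ := h.exists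
    have := isLocalRing_quot hx
    have := ih _ (h.quot hx hx2)
    have hp : (Ideal.span {x}).IsPrime := (Ideal.Quotient.isDomain_iff_prime _).1 this
    obtain ⟨q, hq, hqx⟩ := Ideal.exists_minimalPrimes_le (bot_le : ⊥ ≤ Ideal.span {x})
    have hqp : q.IsPrime := hq.1.1
    have hbot : q = ⊥ := by
      apply Submodule.eq_bot_of_le_smul_of_le_jacobson_bot (Ideal.span {x}) _
        (IsNoetherian.noetherian _)
      · intro y hy
        obtain ⟨a, rfl⟩ := Ideal.mem_span_singleton'.1 (hqx hy)
        have ha : a ∈ q := (hqp.mem_or_mem hy).resolve_right (hxq q hq)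
        rw [smul_eq_mul, mul_comm a x]
        exact Ideal.mul_mem_mul (Ideal.mem_span_singleton_self x) ha
      · rw [Ideal.span_singleton_le_iff_mem]
        exact maximalIdeal_le_jacobson _ hx
    subst hbot
    exact IsDomain.of_bot_isPrime A

end

section
universe u

lemma smul_ExtM_aux {R : Type u} [CommRing R] (M N : ModuleCat.{u} R) (r : R) (i : ℕ)
    (h : ∀ x : Abelian.Ext M N (i + 1), r • x = 0) 
    (x : ((Ext R (ModuleCat.{u} R) (i + 1)).obj (Opposite.op M)).obj N) : r • x = 0 := by
  let P := projectiveResolution M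
  let e := P.isoExt (R := R) (i + 1) N
  suffices H : ∀ y : ((P.complex.linearYonedaObj R N).homology (i + 1) : ModuleCat R), r • y = 0 by
    have := H (e.hom.hom x)
    rw [← map_smul] at this
    have h2 := congrArg e.inv.hom this
    rw [map_zero] at h2
    refine Eq.trans ?_ h2
    exact (ConcreteCategory.congr_hom e.hom_inv_id (r • x)).symm
  intro y
  obtain ⟨z, rfl⟩ := (ModuleCat.epi_iff_surjective
    ((P.complex.linearYonedaObj R N).homologyπ (i + 1))).1 inferInstance y
  let f : P.complex.X (i + 1) ⟶ N := ((P.complex.linearYonedaObj R N).iCycles (i + 1)).hom z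
  have hf : P.complex.d (i + 2) (i + 1) ≫ f = 0 := by
    have := ConcreteCategory.congr_hom ((P.complex.linearYonedaObj R N).iCycles_d (i + 1) (i + 2)) z
    exact this
  have h1 := h (P.extMk f (i + 2) rfl hf)
  rw [Abelian.Ext.smul_eq_comp_mk₀, P.extMk_comp_mk₀, P.extMk_eq_zero_iff _ _ _ _ i rfl] at h1
  obtain ⟨g, hg⟩ := h1
  have hz : r • z = ((P.complex.linearYonedaObj R N).toCycles i (i + 1)).hom g := by
    apply (ModuleCat.mono_iff_injective ((P.complex.linearYonedaObj R N).iCycles (i + 1))).1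
      inferInstance
    have := ConcreteCategory.congr_hom ((P.complex.linearYonedaObj R N).toCycles_i i (i + 1)) g
    refine Eq.trans ?_ this.symm
    change ((P.complex.linearYonedaObj R N).iCycles (i + 1)).hom (r • z) = P.complex.d (i + 1) i ≫ g 
    rw [hg, map_smul]
    change r • f = _
    simp
  rw [← map_smul, hz]
  have := ConcreteCategory.congr_hom ((P.complex.linearYonedaObj R N).toCycles_comp_homologyπ i (i + 1)) g
  exact this

def KillsExt (R : Type u) [CommRing R] (r : R) (n : ℕ) (M : ModuleCat.{u} R) : Prop :=
  ∀ i, n < i → ∀ N : ModuleCat.{u} R, ∀ x : Abelian.Ext M N i, r • x = 0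

lemma KillsExt.base {R : Type u} [CommRing R] (r : R) (M P : ModuleCat.{u} R) [Projective P]
    (g : M ⟶ P) (h : P ⟶ M) (hgh : g ≫ h = r • 𝟙 M) : KillsExt R r 0 M := by
  intro i hi N x
  obtain ⟨i, rfl⟩ := Nat.exists_eq_succ_of_ne_zero hi.ne'
  have h1 : r • x = (Abelian.Ext.mk₀ (r • 𝟙 M)).comp x (zero_add _) := by
    rw [Abelian.Ext.mk₀_smul, Abelian.Ext.smul_comp, Abelian.Ext.mk₀_id_comp]
  rw [h1, ← hgh, ← Abelian.Ext.mk₀_comp_mk₀_assoc]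
  rw [Abelian.Ext.eq_zero_of_projective ((Abelian.Ext.mk₀ h).comp x (zero_add _)),
    Abelian.Ext.comp_zero]

lemma KillsExt.step {R : Type u} [CommRing R] (r : R) (n : ℕ) (S : ShortComplex (ModuleCat.{u} R))
    (hS : S.ShortExact) [Projective S.X₂] (h : KillsExt R r n S.X₁) :
    KillsExt R r (n + 1) S.X₃ := by
  intro i hi N x
  obtain ⟨i, rfl⟩ : ∃ j, i = 1 + j := ⟨i - 1, by omega⟩
  obtain ⟨y, rfl⟩ := Abelian.Ext.contravariant_sequence_exact₃ hS N x 
    (by 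
      obtain ⟨j, rfl⟩ : ∃ j, i = j + 1 := ⟨i - 1, by omega⟩
      have := Abelian.Ext.subsingleton_of_projective S.X₂ N (1 + j)
      exact Subsingleton.elim (α := Abelian.Ext S.X₂ N (1 + j + 1)) _ _) rfl
  rw [← Abelian.Ext.comp_smul, h i (by omega), Abelian.Ext.comp_zero]

end

section
universe u
open Function

def FPD (A : Type u) [CommRing A] : ℕ → ∀ (M : Type u) [AddCommGroup M] [Module A M], Prop
  | 0, M, _, _ => Module.Projective A M
  | n + 1, M, _, _ => ∀ (F K : Type u) [AddCommGroup F] [Module A F] [AddCommGroup K] [Module A K]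
      [Module.Free A F] [Module.Finite A F] (i : K →ₗ[A] F) (f : F →ₗ[A] M),
      Injective i → Exact i f → Surjective f → FPD A n K

lemma quotMap_injective {A : Type u} [CommRing A] {x : A} {K F M : Type u} [AddCommGroup F]
    [Module A F] [AddCommGroup K] [Module A K] [AddCommGroup M] [Module A M]
    (i : K →ₗ[A] F) (f : F →ₗ[A] M) (hi : Injective i) (hif : Exact i f)
    (hx : IsSMulRegular M x) : Injective (QuotSMulTop.map x i) := by
  have h0 : Exact (0 : PUnit.{u+1} →ₗ[A] K) i := by
    intro y
    constructor
    · intro h; exact ⟨0, by simpa using (hi (h.trans (map_zero i).symm)).symm⟩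
    · rintro ⟨y, rfl⟩; simp
  have := QuotSMulTop.map_first_exact_on_four_term_exact_of_isSMulRegular_last h0 hif hx
  rw [← LinearMap.ker_eq_bot, eq_bot_iff]
  intro y hy
  obtain ⟨z, rfl⟩ := (this y).1 hy
  simp

lemma FPD.of_quot {A : Type u} [CommRing A] [IsLocalRing A] [IsNoetherianRing A] {x : A}
    (hx : x ∈ IsLocalRing.maximalIdeal A) (hxA : IsSMulRegular A x)
    [IsLocalRing (A ⧸ Ideal.span {x})] (n : ℕ) :
    ∀ (M : Type u) [AddCommGroup M] [Module A M] [Module.Finite A M], IsSMulRegular M x →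
      FPD (A ⧸ Ideal.span {x}) n (QuotSMulTop x M) → FPD A n M := by
  induction n with
  | zero =>
    intro M _ _ _ hM h
    have : Module.Projective (A ⧸ Ideal.span {x}) (QuotSMulTop x M) := h
    have : Module.Finite (A ⧸ Ideal.span {x}) (QuotSMulTop x M) :=
      Module.Finite.of_restrictScalars_finite A _ _
    have hfree : Module.Free (A ⧸ Ideal.span {x}) (QuotSMulTop x M) :=
      Module.free_of_flat_of_isLocalRing
    have : Module.FinitePresentation A M := Module.finitePresentation_of_finite A M
    have := (Module.free_quotSMulTop_iff_free A M (IsLocalRing.maximalIdeal_le_jacobson _ hx) hM).1 hfree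
    exact (inferInstance : Module.Projective A M)
  | succ n ih =>
    intro M _ _ _ hM h F K _ _ _ _ _ _ i f hi hif hf
    have hF : IsSMulRegular F x := by
      let b := Module.Free.chooseBasis A F
      have : IsSMulRegular (Module.Free.ChooseBasisIndex A F → A) x := IsSMulRegular.pi fun _ => hxA
      exact this.of_injective b.equivFun.toLinearMap b.equivFun.injective
    have hK : IsSMulRegular K x := hF.of_injective i hi
    have : Module.Finite A K := Module.Finite.of_injective i hi
    have : Module.Finite (A ⧸ Ideal.span {x}) (QuotSMulTop x F) :=
      Module.Finite.of_restrictScalars_finite A _ _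
    have hs : Surjective (algebraMap A (A ⧸ Ideal.span {x})) := Ideal.Quotient.mk_surjective
    exact ih K hK (h (QuotSMulTop x F) (QuotSMulTop x K)
      ((QuotSMulTop.map x i).extendScalarsOfSurjective hs)
      ((QuotSMulTop.map x f).extendScalarsOfSurjective hs)
      (quotMap_injective i f hi hif hM) (QuotSMulTop.map_exact x hif hf)
      (QuotSMulTop.map_surjective x hf))

open LocalizedModule in
lemma FPD.localize_succ {R : Type u} [CommRing R] (S : Submonoid R) (n : ℕ)
    (M F K : Type u) [AddCommGroup M] [Module R M] [AddCommGroup F] [Module R F]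
    [AddCommGroup K] [Module R K] [Module.Free R F] [Module.Finite R F] (i : K →ₗ[R] F)
    (f : F →ₗ[R] M) (hi : Injective i) (hif : Exact i f) (hf : Surjective f) 
    (h : FPD (Localization S) (n + 1) (LocalizedModule S M)) :
    FPD (Localization S) n (LocalizedModule S K) := by
  have : Module.Free (Localization S) (LocalizedModule S F) :=
    Module.free_of_isLocalizedModule S (mkLinearMap S F)
  have : Module.Finite (Localization S) (LocalizedModule S F) :=
    Module.Finite.of_isLocalizedModule S (mkLinearMap S F)
  exact h (LocalizedModule S F) (LocalizedModule S K) (map S i) (map S f)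
    (LocalizedModule.map_injective S i hi) (LocalizedModule.map_exact S i f hif)
    (LocalizedModule.map_surjective S f hf)

lemma factor_of_projective_localized {R : Type u} [CommRing R] (S : Submonoid R) 
    (M F : Type u) [AddCommGroup M] [Module R M] [AddCommGroup F] [Module R F]
    [Module.FinitePresentation R M] (f : F →ₗ[R] M) (hf : Surjective f)
    (h : Module.Projective (Localization S) (LocalizedModule S M)) :
    ∃ s ∈ S, ∃ g : M →ₗ[R] F, f.comp g = s • LinearMap.id := by
  obtain ⟨σ, hσ⟩ := Module.projective_lifting_property (LocalizedModule.map S f) LinearMap.id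
    (LocalizedModule.map_surjective S f hf)
  obtain ⟨g, s, hg⟩ := Module.FinitePresentation.exists_lift_of_isLocalizedModule S
    (LocalizedModule.mkLinearMap S F) 
    ((σ.restrictScalars R).comp (LocalizedModule.mkLinearMap S M))
  obtain ⟨t, ht⟩ := Module.Finite.exists_smul_of_comp_eq_of_isLocalizedModule S
    (LocalizedModule.mkLinearMap S M) (f.comp g) ((s : R) • LinearMap.id) (by
      ext m
      have h1 := LinearMap.congr_fun hg m
      have h2 := LinearMap.congr_fun hσ (LocalizedModule.mkLinearMap S M m)
      have h3 : LocalizedModule.mkLinearMap S M (f (g m)) = 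
        LocalizedModule.map S f (LocalizedModule.mkLinearMap S F (g m)) := by
        simp
      have h4 : LocalizedModule.mkLinearMap S F (g m) = (s : R) • σ (LocalizedModule.mkLinearMap S M m) := h1
      change LocalizedModule.mkLinearMap S M (f (g m)) = LocalizedModule.mkLinearMap S M ((s : R) • m)
      rw [h3, h4]
      have h5 : LocalizedModule.map S f ((s : R) • σ (LocalizedModule.mkLinearMap S M m)) = 
         (s : R) • LocalizedModule.map S f (σ (LocalizedModule.mkLinearMap S M m)) := 
        ((LocalizedModule.map S f).restrictScalars R).map_smul _ _
      rw [h5, LinearMap.map_smul]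
      exact congrArg _ h2)
  refine ⟨t * s, S.mul_mem t.2 s.2, (t : R) • g, ?_⟩
  rw [LinearMap.comp_smul, mul_smul]
  exact ht

end

section
universe u
open Function

lemma RegD.fpd (d : ℕ) : ∀ (A : Type u) [CommRing A] [IsLocalRing A] [IsNoetherianRing A]
    (_ : RegD A d) (M : Type u) [AddCommGroup M] [Module A M] [Module.Finite A M], FPD A d M := by
  induction d with
  | zero =>
    intro A _ _ _ h M _ _ _
    have hf := h.field
    change Module.Projective A M
    letI : Field A := hf.toField
    exact Module.Projective.of_free
  | succ d ih =>
    intro A _ _ _ h M _ _ _ F K _ _ _ _ _ _ i f hi hif hf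
    have hdom := RegD.isDomain _ A h
    obtain ⟨x, hx, hx2, hxq⟩ := h.exists
    have hx0 : x ≠ 0 := by rintro rfl; exact hx2 (zero_mem _)
    have hxA : IsSMulRegular A x := fun a b hab => mul_left_cancel₀ hx0 hab
    have := isLocalRing_quot hx
    have hF : IsSMulRegular F x := by
      let b := Module.Free.chooseBasis A F
      have : IsSMulRegular (Module.Free.ChooseBasisIndex A F → A) x := IsSMulRegular.pi fun _ => hxA
      exact this.of_injective b.equivFun.toLinearMap b.equivFun.injective
    have hK : IsSMulRegular K x := hF.of_injective i hi
    have : Module.Finite A K := Module.Finite.of_injective i hi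
    have : Module.Finite (A ⧸ Ideal.span {x}) (QuotSMulTop x K) :=
      Module.Finite.of_restrictScalars_finite A _ _
    exact FPD.of_quot hx hxA d K hK (ih (A ⧸ Ideal.span {x}) (h.quot hx hx2) (QuotSMulTop x K))

lemma exists_kills {R : Type u} [CommRing R] [IsNoetherianRing R] (S : Submonoid R) (n : ℕ) :
    ∀ (M : Type u) [AddCommGroup M] [Module R M] [Module.Finite R M],
      FPD (Localization S) n (LocalizedModule S M) →
      ∃ s ∈ S, KillsExt R s n (ModuleCat.of R M) := by
  induction n with
  | zero =>
    intro M _ _ _ h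
    obtain ⟨k, f, hf⟩ := Module.Finite.exists_fin' R M
    have : Module.FinitePresentation R M := Module.finitePresentation_of_finite R M
    obtain ⟨s, hs, g, hg⟩ := factor_of_projective_localized S M (Fin k → R) f hf h
    have : Projective (ModuleCat.of R (Fin k → R)) :=
      (IsProjective.iff_projective (Fin k → R)).1 inferInstance
    refine ⟨s, hs, KillsExt.base s _ (ModuleCat.of R (Fin k → R)) (ModuleCat.ofHom g)
      (ModuleCat.ofHom f) ?_⟩
    ext m
    exact LinearMap.congr_fun hg m
  | succ n ih =>
    intro M _ _ _ h
    obtain ⟨k, f, hf⟩ := Module.Finite.exists_fin' R M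
    have h1 := FPD.localize_succ S n M (Fin k → R) (LinearMap.ker f) (LinearMap.ker f).subtype f
      (Submodule.subtype_injective _) (LinearMap.exact_subtype_ker_map f) hf h
    obtain ⟨s, hs, hk⟩ := ih _ h1
    have : Projective (ModuleCat.of R (Fin k → R)) :=
      (IsProjective.iff_projective (Fin k → R)).1 inferInstance
    have : Projective f.shortComplexKer.X₂ := this
    exact ⟨s, hs, KillsExt.step s n f.shortComplexKer (LinearMap.shortExact_shortComplexKer hf) hk⟩
end

/-- `V(ca_R(M)) ⊆ Sing(R)`. -/
theorem stmt9 (R : Type u) [CommRing R] [IsNoetherianRing R]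
    (M : ModuleCat.{u} R) [Module.Finite R M] (p : PrimeSpectrum R)
    (hp : ca R M ⊆ (p.asIdeal : Set R)) :
    ¬ IsRegularLocal (Localization.AtPrime p.asIdeal) := by
  rintro ⟨hN, s, hs, hd⟩
  have hreg : RegD (Localization.AtPrime p.asIdeal) s.card := ⟨s, le_rfl, hs, hd.le⟩
  have hfin : Module.Finite (Localization p.asIdeal.primeCompl)
      (LocalizedModule p.asIdeal.primeCompl M) :=
    Module.Finite.of_isLocalizedModule p.asIdeal.primeCompl
      (LocalizedModule.mkLinearMap p.asIdeal.primeCompl M)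
  obtain ⟨r, hr, hk⟩ := exists_kills p.asIdeal.primeCompl s.card M
    (RegD.fpd s.card (Localization.AtPrime p.asIdeal) hreg
      (LocalizedModule p.asIdeal.primeCompl M))
  refine hr (hp (Set.mem_iUnion.2 ⟨s.card + 1, ?_⟩))
  intro i hi N _ x
  obtain ⟨j, rfl⟩ : ∃ j, i = j + 1 := ⟨i - 1, by omega⟩
  exact smul_ExtM_aux M N r j (fun y => hk (j + 1) (by omega) N y) x
end
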